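/- Let k ≥ 2, let r_1,…,r_k be fixed positive integers, r = r_1 + ⋯ + r_k, and let {G_i}_{i≥1} be a sequence of finite groups with identity e such that |G_i| → ∞, the exponent of G_i divides r, and gcd(r_j, |G_i|) = 1 for every j ∈ {1,…,k} and every i. Let S_i = {(x_1,…,x_k) ∈ G_i^k : x_1^{r_1}·x_2^{r_2}·…·x_k^{r_k} = e} and let S_i^{(k)} be the tuples of S_i with pairwise distinct entries. Then for every β > 0 and every δ with 0 < δ ≤ min{β/2, 1/40} there exist an index i₀ and a constant C > 0 such that for every i ≥ i₀ and every integer t with (C/δ)·k^{−1/(k−1)}·|G_i|^{1/(k−1)} ≤ t ≤ (δ/2)·|G_i|, the number of subsets X ⊆ G_i with |X| = t and X^k ∩ S_i^{(k)} = ∅ is at most C(⌊β|G_i|⌋, t). -/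

import Mathlib

open Finset Filter Topology

attribute [local instance] Classical.propDecidable

/-- The set `S^{(k)}` of tuples of `S` with pairwise distinct entries. -/
noncomputable def distinctPart {k : ℕ} {G : Type} (S : Finset (Fin k → G)) :
    Finset (Fin k → G) :=
  S.filter fun x => Function.Injective x

section containers

def Consist {V S : Type} (F : Finset V → Finset V) (σ : Finset V → S) : Prop :=
  (∀ I, F I ⊆ I) ∧ ∀ I J, F I ⊆ J → J ⊆ I → F J = F I ∧ σ J = σ I

lemma Consist.pure {V S : Type} (a : S) : Consist (fun _ : Finset V => (∅ : Finset V)) (fun _ => a) :=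
  ⟨fun _ => by simp, fun _ _ _ _ => by simp⟩

lemma Consist.bind {V S S' : Type} {F : Finset V → Finset V} {σ : Finset V → S}
    (h : Consist F σ) {F2 : S → Finset V → Finset V} {σ2 : S → Finset V → S'}
    (h2 : ∀ a, Consist (F2 a) (σ2 a)) :
    Consist (fun I => F I ∪ F2 (σ I) I) (fun I => σ2 (σ I) I) := by
  refine ⟨fun I => union_subset (h.1 I) ((h2 _).1 I), fun I J h1 h3 => ?_⟩
  have hF := union_subset_iff.1 h1
  obtain ⟨e1, e2⟩ := h.2 I J hF.1 h3
  obtain ⟨e3, e4⟩ := (h2 (σ I)).2 I J hF.2 h3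
  simp only [e1, e2, e3, e4, and_self]

lemma Consist.pick {V S : Type} (d : V → ℕ) (st : V → S) (a0 : S) :
    ∃ (F : Finset V → Finset V) (σ : Finset V → S), Consist F σ ∧
      ∀ I : Finset V, I.Nonempty → ∃ v ∈ I, F I = {v} ∧ σ I = st v ∧ ∀ u ∈ I, d u ≤ d v := by
  -- choose a well order to break ties
  obtain ⟨r, hr⟩ : ∃ r : V → V → Prop, IsWellOrder V r := ⟨WellOrderingRel, inferInstance⟩
  have key : ∀ I : Finset V, I.Nonempty → ∃ v ∈ I, (∀ u ∈ I, d u ≤ d v) ∧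
      ∀ u ∈ I, d u = d v → ¬ r u v := by
    intro I hI
    obtain ⟨m, hm, hmax⟩ := I.exists_max_image d hI
    have hne : ({u | u ∈ I ∧ d u = d m} : Set V).Nonempty := ⟨m, hm, rfl⟩
    obtain ⟨v, hv, hv2⟩ := hr.wf.has_min _ hne
    refine ⟨v, hv.1, fun u hu => by rw [hv.2]; exact hmax u hu, fun u hu he => hv2 u ⟨hu, he.trans hv.2⟩⟩
  rcases isEmpty_or_nonempty V with hV | hV
  · refine ⟨fun _ => ∅, fun _ => a0, Consist.pure a0, fun I hI => ?_⟩
    exact isEmptyElim hI.choose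
  choose! p hp1 hp2 hp3 using key
  refine ⟨fun I => if I.Nonempty then {p I} else ∅, fun I => if I.Nonempty then st (p I) else a0,
    ⟨fun I => ?_, fun I J h1 h2 => ?_⟩, fun I hI => ⟨p I, hp1 I hI, by simp [hI], by simp [hI], hp2 I hI⟩⟩
  · dsimp only
    split_ifs with h
    · simpa using hp1 I h
    · simp
  · by_cases hI : I.Nonempty
    · simp only [hI, if_true, singleton_subset_iff] at h1 ⊢
      have hJ : J.Nonempty := ⟨_, h1⟩
      have e : p J = p I := by
        have a1 := hp2 J hJ _ h1
        have a2 := hp2 I hI _ (h2 (hp1 J hJ))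
        have a3 := hp3 J hJ _ h1 (le_antisymm a1 a2)
        have a4 := hp3 I hI _ (h2 (hp1 J hJ)) (le_antisymm a2 a1)
        rcases trichotomous_of r (p J) (p I) with h | h | h
        · exact absurd h a4
        · exact h
        · exact absurd h a3
      simp [hJ, e]
    · have : J = I := by
        rw [not_nonempty_iff_eq_empty] at hI
        subst hI; exact subset_empty.1 h2
      simp [this]

noncomputable def hdeg {V : Type} {j : ℕ} (H : Finset (Fin j → V)) (T : Finset (Fin j)) (z : Fin j → V) : ℕ :=
  (H.filter fun x => ∀ i ∈ T, x i = z i).card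

def Sat {V : Type} {j : ℕ} (thr : ℕ → ℝ) (h : Finset (Fin j → V)) (y : Fin j → V) : Prop :=
  y ∈ h ∨ ∃ T : Finset (Fin j), T.Nonempty ∧ 0 < hdeg h T y ∧ thr T.card ≤ hdeg h T y

lemma hdeg_mono {V : Type} {j : ℕ} {h h' : Finset (Fin j → V)} (hh : h ⊆ h') (T : Finset (Fin j)) (y) :
    hdeg h T y ≤ hdeg h' T y := card_le_card (filter_subset_filter _ hh)

lemma Sat.mono {V : Type} {j : ℕ} {thr : ℕ → ℝ} {h h' : Finset (Fin j → V)} (hh : h ⊆ h') {y}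
    (hs : Sat thr h y) : Sat thr h' y := by
  rcases hs with hs | ⟨T, h1, h2, h3⟩
  · exact Or.inl (hh hs)
  · exact Or.inr ⟨T, h1, h2.trans_le (hdeg_mono hh T y), h3.trans (by exact_mod_cast hdeg_mono hh T y)⟩

noncomputable def newLink {V : Type} [Fintype V] {j : ℕ} (thr : ℕ → ℝ) (H : Finset (Fin (j+1) → V))
    (h : Finset (Fin j → V)) (v : V) : Finset (Fin j → V) :=
  univ.filter fun y => (Fin.cons v y : Fin (j+1) → V) ∈ H ∧ ¬ Sat thr h y

lemma newLink_anti {V : Type} [Fintype V] {j : ℕ} {thr : ℕ → ℝ} {H : Finset (Fin (j+1) → V)}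
    {h h' : Finset (Fin j → V)} (hh : h ⊆ h') (v : V) : newLink thr H h' v ⊆ newLink thr H h v := by
  intro y hy
  simp only [newLink, mem_filter, mem_univ, true_and] at hy ⊢
  exact ⟨hy.1, fun hs => hy.2 (hs.mono hh)⟩

lemma step_inv {V : Type} [Fintype V] {j : ℕ} {thr D : ℕ → ℝ} (hthr : ∀ m, 0 < thr m)
    {H : Finset (Fin (j+1) → V)}
    (hD : ∀ T : Finset (Fin (j+1)), T.Nonempty → ∀ z, (hdeg H T z : ℝ) ≤ D T.card)
    {h : Finset (Fin j → V)}
    (hh : ∀ T : Finset (Fin j), T.Nonempty → ∀ z, (hdeg h T z : ℝ) ≤ thr T.card + D (T.card + 1)) (v : V) :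
    ∀ T : Finset (Fin j), T.Nonempty → ∀ z,
      (hdeg (h ∪ newLink thr H h v) T z : ℝ) ≤ thr T.card + D (T.card + 1) := by
  intro T hT z
  by_cases hex : ∃ y ∈ newLink thr H h v, ∀ i ∈ T, y i = z i
  · obtain ⟨y, hy, hyz⟩ := hex
    have e : hdeg h T y = hdeg h T z := by
      unfold hdeg
      congr 1
      apply filter_congr
      intro x _
      exact forall₂_congr fun i hi => by rw [hyz i hi]
    have h1 : (hdeg h T z : ℝ) ≤ thr T.card := by
      simp only [newLink, mem_filter, mem_univ, true_and, Sat, not_or, not_exists, not_and] at hy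
      by_contra hcon
      push Not at hcon
      have h0 : 0 < hdeg h T y := by
        rw [e]
        have : (0:ℝ) < hdeg h T z := (hthr _).trans hcon
        exact_mod_cast this
      exact hy.2.2 T hT h0 (by rw [e]; exact hcon.le)
    have h2 : ((newLink thr H h v).filter (fun x => ∀ i ∈ T, x i = z i)).card ≤
        hdeg H (insert 0 (T.map (Fin.succEmb j))) (Fin.cons v z) := by
      unfold hdeg
      apply card_le_card_of_injOn (fun y => (Fin.cons v y : Fin (j+1) → V))
      · intro x hx
        simp only [newLink, coe_filter, mem_filter, mem_univ, true_and, Set.mem_ofPred_eq] at hx ⊢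
        refine ⟨hx.1.1, fun i hi => ?_⟩
        rw [mem_insert, Finset.mem_map] at hi
        rcases hi with rfl | ⟨a, ha, rfl⟩
        · simp
        · simpa using hx.2 a ha
      · intro x _ x' _ hxx
        exact Fin.cons_right_injective (α := fun _ => V) v hxx
    have h3 := hD (insert 0 (T.map (Fin.succEmb j))) (insert_nonempty _ _) (Fin.cons v z)
    have hc : (insert 0 (T.map (Fin.succEmb j))).card = T.card + 1 := by
      rw [card_insert_of_notMem, card_map]
      simp [Fin.succ_ne_zero]
    rw [hc] at h3
    have h4 : hdeg (h ∪ newLink thr H h v) T z ≤ hdeg h T z +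
        ((newLink thr H h v).filter (fun x => ∀ i ∈ T, x i = z i)).card := by
      unfold hdeg
      rw [filter_union]
      exact card_union_le _ _
    have h5 : (hdeg (h ∪ newLink thr H h v) T z : ℝ) ≤ hdeg h T z +
      hdeg H (insert 0 (T.map (Fin.succEmb j))) (Fin.cons v z) := by exact_mod_cast h4.trans (by omega)
    linarith
  · have : hdeg (h ∪ newLink thr H h v) T z = hdeg h T z := by
      unfold hdeg
      rw [filter_union, (filter_eq_empty_iff (s := newLink thr H h v)).2, union_empty]
      intro x hx hc
      exact hex ⟨x, hx, hc⟩
    rw [this]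
    exact hh T hT z

lemma run_steps {V : Type} [Fintype V] {j : ℕ} {thr D : ℕ → ℝ} (hthr : ∀ m, 0 < thr m)
    {H : Finset (Fin (j+1) → V)}
    (hD : ∀ T : Finset (Fin (j+1)), T.Nonempty → ∀ z, (hdeg H T z : ℝ) ≤ D T.card) (b : ℝ) (N : ℕ) :
    ∀ h : Finset (Fin j → V),
    (∀ T : Finset (Fin j), T.Nonempty → ∀ z, (hdeg h T z : ℝ) ≤ thr T.card + D (T.card + 1)) →
    ∃ (F : Finset V → Finset V) (σ : Finset V → Finset (Fin j → V)), Consist F σ ∧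
      ∀ I : Finset V, I.Nonempty → (F I).card ≤ N ∧ h ⊆ σ I ∧
        (∀ y ∈ σ I, y ∈ h ∨ ∃ v ∈ I, (Fin.cons v y : Fin (j+1) → V) ∈ H) ∧
        (∀ T : Finset (Fin j), T.Nonempty → ∀ z, (hdeg (σ I) T z : ℝ) ≤ thr T.card + D (T.card + 1)) ∧
        ((∀ v ∈ I, ((newLink thr H (σ I) v).card : ℝ) ≤ b) ∨ (h.card : ℝ) + N * b ≤ (σ I).card) := by
  induction N with
  | zero =>
    intro h hh
    refine ⟨_, _, Consist.pure h, fun I hI => ⟨by simp, Subset.rfl, fun y hy => Or.inl hy, hh, Or.inr (by simp)⟩⟩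
  | succ N ih =>
    intro h hh
    obtain ⟨F1, σ1, hc1, hp1⟩ := Consist.pick (fun v => (newLink thr H h v).card) (fun v => some v) (none : Option V)
    have ih2 : ∀ v : Option V, ∃ (F : Finset V → Finset V) (σ : Finset V → Finset (Fin j → V)), Consist F σ ∧
      ∀ v', v = some v' → ∀ I : Finset V, I.Nonempty → (F I).card ≤ N ∧ (h ∪ newLink thr H h v') ⊆ σ I ∧
        (∀ y ∈ σ I, y ∈ (h ∪ newLink thr H h v') ∨ ∃ v ∈ I, (Fin.cons v y : Fin (j+1) → V) ∈ H) ∧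
        (∀ T : Finset (Fin j), T.Nonempty → ∀ z, (hdeg (σ I) T z : ℝ) ≤ thr T.card + D (T.card + 1)) ∧
        ((∀ v ∈ I, ((newLink thr H (σ I) v).card : ℝ) ≤ b) ∨ ((h ∪ newLink thr H h v').card : ℝ) + N * b ≤ (σ I).card) := by
      intro v
      cases v with
      | none => exact ⟨_, _, Consist.pure h, by simp⟩
      | some v =>
        obtain ⟨F, σ, a1, a2⟩ := ih (h ∪ newLink thr H h v) (step_inv hthr hD hh v)
        refine ⟨F, σ, a1, ?_⟩
        rintro v' ⟨⟩
        exact a2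
    choose F2 σ2 hc2 hp2 using ih2
    refine ⟨_, _, hc1.bind hc2, fun I hI => ?_⟩
    obtain ⟨v, hv, e1, e2, hmax⟩ := hp1 I hI
    obtain ⟨q1, q2, q3, q4, q5⟩ := hp2 (σ1 I) v e2 I hI
    have hsub : h ⊆ σ2 (σ1 I) I := subset_union_left.trans q2
    refine ⟨?_, hsub, ?_, q4, ?_⟩
    · refine (card_union_le _ _).trans ?_
      rw [e1, card_singleton]; omega
    · intro y hy
      rcases q3 y hy with hy | hy
      · rcases mem_union.1 hy with hy | hy
        · exact Or.inl hy
        · simp only [newLink, mem_filter] at hy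
          exact Or.inr ⟨v, hv, hy.2.1⟩
      · exact Or.inr hy
    · by_cases hb : ((newLink thr H h v).card : ℝ) ≤ b
      · left
        intro u hu
        refine le_trans ?_ hb
        exact_mod_cast (card_le_card (newLink_anti hsub u)).trans (hmax u hu)
      · rcases q5 with q5 | q5
        · exact Or.inl q5
        · right
          refine le_trans ?_ q5
          rw [card_union_of_disjoint]
          · push_cast
            push Not at hb
            linarith
          · rw [Finset.disjoint_left]
            intro y hy hy2
            have := (mem_filter.1 hy2).2.2
            exact this (Or.inl hy)

end containers

section containers2

lemma loss_bound {V : Type} [Fintype V] {j : ℕ} {D : ℕ → ℝ}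
    {H : Finset (Fin (j+1) → V)}
    (hD : ∀ T : Finset (Fin (j+1)), T.Nonempty → ∀ z, (hdeg H T z : ℝ) ≤ D T.card)
    (h : Finset (Fin j → V)) (T : Finset (Fin j)) (hT : T.Nonempty) (θ : ℝ) (hθ : 0 < θ) :
    ((H.filter fun x => θ ≤ hdeg h T (Fin.tail x)).card : ℝ) * θ ≤ h.card * D T.card := by
  set s := H.filter fun x => θ ≤ hdeg h T (Fin.tail x) with hs
  let g : (Fin j → V) → (T → V) := fun y i => y i
  let f : (Fin (j+1) → V) → (T → V) := fun x => g (Fin.tail x)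
  have h1 : (s.card : ℝ) ≤ (s.image f).card * D T.card := by
    rw [card_eq_sum_card_image f s]
    push_cast
    rw [← nsmul_eq_mul]
    apply sum_le_card_nsmul
    intro b hb
    obtain ⟨x, hx, rfl⟩ := mem_image.1 hb
    have := hD (T.map (Fin.succEmb j)) (by simpa using hT) x
    rw [card_map] at this
    refine le_trans ?_ this
    norm_cast
    unfold hdeg
    apply card_le_card
    intro z hz
    rw [mem_filter] at hz ⊢
    refine ⟨(mem_filter.1 hz.1).1, fun i hi => ?_⟩
    obtain ⟨a, ha, rfl⟩ := Finset.mem_map.1 hi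
    exact congrFun hz.2 ⟨a, ha⟩
  have h2 : ((s.image f).card : ℝ) * θ ≤ h.card := by
    have e : h.card = ∑ b : (T → V), (h.filter fun y => g y = b).card :=
      card_eq_sum_card_fiberwise (fun _ _ => mem_coe.2 (mem_univ _))
    rw [e]
    push_cast
    rw [← nsmul_eq_mul]
    refine le_trans ?_ (sum_le_sum_of_subset_of_nonneg (subset_univ (s.image f)) (fun _ _ _ => by positivity))
    apply card_nsmul_le_sum
    intro b hb
    obtain ⟨x, hx, rfl⟩ := mem_image.1 hb
    refine (mem_filter.1 hx).2.trans ?_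
    norm_cast
    unfold hdeg
    apply card_le_card
    intro z hz
    rw [mem_filter] at hz ⊢
    exact ⟨hz.1, funext fun i => hz.2 i i.2⟩
  rcases s.eq_empty_or_nonempty with he | ⟨x, hx⟩
  · rw [he]
    obtain D0 | hh : 0 ≤ D T.card ∨ IsEmpty (Fin (j+1) → V) := by
      rcases isEmpty_or_nonempty (Fin (j+1) → V) with hh | ⟨⟨z⟩⟩
      · exact Or.inr hh
      · left
        have := hD (T.map (Fin.succEmb j)) (by simpa using hT) z
        rw [card_map] at this
        exact le_trans (by positivity) this
    · simp; positivity
    · have : IsEmpty (Fin j → V) := by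
        rcases isEmpty_or_nonempty V with hV | ⟨⟨v⟩⟩
        · exact ⟨fun y => isEmptyElim (y hT.choose)⟩
        · exact (hh.false fun _ => v).elim
      have : h = ∅ := by
        apply eq_empty_of_forall_notMem
        exact fun y => isEmptyElim y
      simp [this]
  · have D0 : 0 ≤ D T.card := by
      have := hD (T.map (Fin.succEmb j)) (by simpa using hT) x
      rw [card_map] at this
      exact le_trans (by positivity) this
    calc (s.card : ℝ) * θ ≤ ((s.image f).card * D T.card) * θ := by gcongr
      _ = ((s.image f).card * θ) * D T.card := by ring
      _ ≤ _ := by gcongr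

lemma sum_newLink {V : Type} [Fintype V] {j : ℕ} (thr : ℕ → ℝ) (H : Finset (Fin (j+1) → V))
    (h : Finset (Fin j → V)) :
    ∑ v, (newLink thr H h v).card = (H.filter fun x => ¬ Sat thr h (Fin.tail x)).card := by
  rw [card_eq_sum_card_fiberwise (f := fun x : Fin (j+1) → V => x 0) (t := univ) (fun _ _ => mem_coe.2 (mem_univ _))]
  apply sum_congr rfl
  intro v _
  apply card_bij (fun y _ => (Fin.cons v y : Fin (j+1) → V))
  · intro y hy
    have := (mem_filter.1 hy).2
    simp [this]
  · intro a _ b _ hab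
    exact Fin.cons_right_injective (α := fun _ => V) v hab
  · intro x hx
    rw [mem_filter, mem_filter] at hx
    refine ⟨Fin.tail x, ?_, ?_⟩
    · simp only [newLink, mem_filter, mem_univ, true_and]
      rw [← hx.2, Fin.cons_self_tail]
      exact hx.1
    · rw [← hx.2, Fin.cons_self_tail]

lemma level_step {V : Type} [Fintype V] {j : ℕ} (hj : 1 ≤ j) {thr D : ℕ → ℝ} (hthr : ∀ m, 0 < thr m)
    {H : Finset (Fin (j+1) → V)} (A : Finset V) (hA : ∀ x ∈ H, ∀ i, x i ∈ A)
    (hD : ∀ T : Finset (Fin (j+1)), T.Nonempty → ∀ z, (hdeg H T z : ℝ) ≤ D T.card)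
    (hD0 : ∀ m, 0 < D m)
    (s : ℕ) (hs : 0 < s) (τ : ℝ) (hτ : 0 < τ)
    (hl1 : ∀ m, 1 ≤ m → m ≤ j → τ * D m * 2 ^ (j+2) ≤ H.card * thr m)
    (hl2 : τ * D j ≤ H.card / 4) (hav : Fintype.card V * (τ / s) ≤ H.card / 4) :
    ∃ (F : Finset V → Finset V) (σ : Finset V → Finset (Fin j → V) × Finset V), Consist F σ ∧
      ∀ I : Finset V, I.Nonempty → (∀ x ∈ H, ¬ ∀ i, x i ∈ I) → (F I).card ≤ s ∧
        (∀ x ∈ (σ I).1, ¬ ∀ i, x i ∈ I) ∧ (∀ x ∈ (σ I).1, ∀ i, x i ∈ A) ∧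
        (∀ T : Finset (Fin j), T.Nonempty → ∀ z, (hdeg (σ I).1 T z : ℝ) ≤ thr T.card + D (T.card + 1)) ∧
        (τ ≤ (σ I).1.card ∨
          ((σ I).2 ⊆ A ∧ (∀ v ∈ I, v ∉ (σ I).2) ∧ (H.card : ℝ) / 4 ≤ (σ I).2.card * D 1)) := by
  obtain ⟨F, σ, hc, hp⟩ := run_steps hthr hD (τ / s) s ∅ (by
    intro T hT z
    have : hdeg (∅ : Finset (Fin j → V)) T z = 0 := by simp [hdeg]
    rw [this]
    have := hthr T.card
    have := hD0 (T.card + 1)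
    push_cast; linarith)
  refine ⟨F, fun I => (σ I, univ.filter fun v => τ / s < ((newLink thr H (σ I) v).card : ℝ)),
    ⟨hc.1, fun I J h1 h2 => ?_⟩, ?_⟩
  · obtain ⟨e1, e2⟩ := hc.2 I J h1 h2
    simp only [e1, e2, and_self]
  intro I hI hind
  obtain ⟨q1, -, q3, q4, q5⟩ := hp I hI
  refine ⟨q1, ?_, ?_, q4, ?_⟩
  · intro x hx hxI
    rcases q3 x hx with h | ⟨v, hv, h⟩
    · simp at h
    · refine hind _ h fun i => ?_
      refine Fin.cases ?_ (fun i => ?_) i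
      · simpa using hv
      · simpa using hxI i
  · intro x hx i
    rcases q3 x hx with h | ⟨v, hv, h⟩
    · simp at h
    · simpa using hA _ h i.succ
  · by_cases hcard : τ ≤ (σ I).card
    · exact Or.inl hcard
    right
    push Not at hcard
    have hq5 : ∀ v ∈ I, ((newLink thr H (σ I) v).card : ℝ) ≤ τ / s := by
      rcases q5 with h | h
      · exact h
      · exfalso
        have : (s:ℝ) * (τ / s) = τ := by field_simp
        rw [this] at h
        simp at h
        linarith
    dsimp only
    set Dd := univ.filter fun v => τ / s < ((newLink thr H (σ I) v).card : ℝ) with hDd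
    refine ⟨?_, ?_, ?_⟩
    · intro v hv
      have h1 := (mem_filter.1 hv).2
      have h2 : 0 < (newLink thr H (σ I) v).card := by
        have : (0:ℝ) < ((newLink thr H (σ I) v).card : ℝ) := lt_of_le_of_lt (by positivity) h1
        exact_mod_cast this
      obtain ⟨y, hy⟩ := card_pos.1 h2
      simpa using hA _ (mem_filter.1 hy).2.1 0
    · intro v hv hv2
      exact absurd (hq5 v hv) (not_le.2 (mem_filter.1 hv2).2)
    · -- sat edges
      have hsat : ((H.filter fun x => Sat thr (σ I) (Fin.tail x)).card : ℝ) ≤ H.card / 2 := by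
        have hsub : (H.filter fun x => Sat thr (σ I) (Fin.tail x)) ⊆
            (H.filter fun x => (1:ℝ) ≤ hdeg (σ I) univ (Fin.tail x)) ∪
            ((univ : Finset (Finset (Fin j))).filter (fun T => T.Nonempty)).biUnion
              (fun T => H.filter fun x => thr T.card ≤ hdeg (σ I) T (Fin.tail x)) := by
          intro x hx
          obtain ⟨hxH, hx2⟩ := mem_filter.1 hx
          rcases hx2 with h | ⟨T, hT, -, h⟩
          · apply mem_union_left
            rw [mem_filter]
            refine ⟨hxH, ?_⟩
            have : 0 < hdeg (σ I) univ (Fin.tail x) :=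
              card_pos.2 ⟨Fin.tail x, mem_filter.2 ⟨h, fun _ _ => rfl⟩⟩
            exact_mod_cast this
          · apply mem_union_right
            rw [mem_biUnion]
            exact ⟨T, mem_filter.2 ⟨mem_univ _, hT⟩, mem_filter.2 ⟨hxH, h⟩⟩
        have hc1 : ((H.filter fun x => (1:ℝ) ≤ hdeg (σ I) univ (Fin.tail x)).card : ℝ) ≤ H.card / 4 := by
          have hne : (univ : Finset (Fin j)).Nonempty := ⟨⟨0, hj⟩, mem_univ _⟩
          have := loss_bound hD (σ I) univ hne 1 one_pos
          rw [card_univ, Fintype.card_fin, mul_one] at this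
          have h0 := hD0 j
          nlinarith
        have hc2 : ∀ T ∈ ((univ : Finset (Finset (Fin j))).filter (fun T => T.Nonempty)),
            ((H.filter fun x => thr T.card ≤ hdeg (σ I) T (Fin.tail x)).card : ℝ) ≤ H.card / 2 ^ (j+2) := by
          intro T hT
          have hT := (mem_filter.1 hT).2
          have h1 := loss_bound hD (σ I) T hT (thr T.card) (hthr _)
          have h2 := hl1 T.card hT.card_pos (by simpa using card_le_univ T)
          have h0 := hD0 T.card
          have h3 := hthr T.card
          rw [le_div_iff₀ (by positivity)]
          refine le_of_mul_le_mul_right ?_ h3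
          calc _ = (((H.filter fun x => thr T.card ≤ hdeg (σ I) T (Fin.tail x)).card : ℝ) * thr T.card) * 2 ^ (j+2) := by ring
            _ ≤ (((σ I).card : ℝ) * D T.card) * 2 ^ (j+2) := by gcongr
            _ ≤ (τ * D T.card) * 2 ^ (j+2) := by gcongr
            _ ≤ _ := h2
        have hc3 : ((((univ : Finset (Finset (Fin j))).filter (fun T => T.Nonempty)).biUnion
              (fun T => H.filter fun x => thr T.card ≤ hdeg (σ I) T (Fin.tail x))).card : ℝ) ≤ H.card / 4 := by
          calc _ ≤ ∑ T ∈ ((univ : Finset (Finset (Fin j))).filter (fun T => T.Nonempty)),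
                ((H.filter fun x => thr T.card ≤ hdeg (σ I) T (Fin.tail x)).card : ℝ) := by
                  exact_mod_cast card_biUnion_le
            _ ≤ _ := sum_le_card_nsmul _ _ _ hc2
            _ ≤ 2 ^ j * (H.card / 2 ^ (j+2)) := by
                rw [nsmul_eq_mul]
                gcongr
                have : (((univ : Finset (Finset (Fin j))).filter (fun T => T.Nonempty)).card) ≤ 2 ^ j := by
                  refine (card_filter_le _ _).trans ?_
                  simp
                exact_mod_cast this
            _ = H.card / 4 := by
                rw [pow_add]; field_simp; ring
        have hc4 : ((H.filter fun x => Sat thr (σ I) (Fin.tail x)).card : ℝ) ≤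
            ((H.filter fun x => (1:ℝ) ≤ hdeg (σ I) univ (Fin.tail x)).card : ℝ) +
            ((((univ : Finset (Finset (Fin j))).filter (fun T => T.Nonempty)).biUnion
              (fun T => H.filter fun x => thr T.card ≤ hdeg (σ I) T (Fin.tail x))).card : ℝ) := by
          exact_mod_cast (card_le_card hsub).trans (card_union_le _ _)
        linarith
      have hsum : ((∑ v, (newLink thr H (σ I) v).card : ℕ) : ℝ) ≥ H.card / 2 := by
        rw [sum_newLink]
        have := card_filter_add_card_filter_not (s := H) (fun x => Sat thr (σ I) (Fin.tail x))
        have : ((H.filter fun x => Sat thr (σ I) (Fin.tail x)).card : ℝ) +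
          ((H.filter fun x => ¬ Sat thr (σ I) (Fin.tail x)).card : ℝ) = H.card := by exact_mod_cast this
        linarith
      have hub : ((∑ v, (newLink thr H (σ I) v).card : ℕ) : ℝ) ≤
          Dd.card * D 1 + Fintype.card V * (τ / s) := by
        push_cast
        calc ∑ v, ((newLink thr H (σ I) v).card : ℝ) ≤ ∑ v, ((if v ∈ Dd then D 1 else 0) + τ / s) := by
              apply sum_le_sum
              intro v _
              split_ifs with hv
              · have h1 := hD {0} (by simp) (fun _ => v)
                have h2 : (newLink thr H (σ I) v).card ≤ hdeg H {0} (fun _ => v) := by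
                  unfold hdeg
                  apply card_le_card_of_injOn (fun y => (Fin.cons v y : Fin (j+1) → V))
                  · intro y hy
                    have := (mem_filter.1 (mem_coe.1 hy)).2
                    simp [this]
                  · intro x _ x' _ hxx
                    exact Fin.cons_right_injective (α := fun _ => V) v hxx
                have h3 : ((newLink thr H (σ I) v).card : ℝ) ≤ hdeg H {0} (fun _ => v) := by exact_mod_cast h2
                rw [card_singleton] at h1
                have : 0 ≤ τ / s := by positivity
                linarith
              · have : ¬ (τ / s < ((newLink thr H (σ I) v).card : ℝ)) := fun h =>
                  hv (mem_filter.2 ⟨mem_univ _, h⟩)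
                linarith
          _ = _ := by
              rw [sum_add_distrib]
              simp
      linarith

lemma levels (j : ℕ) : ∀ (c K B : ℝ), 0 < c → 0 < K → 0 < B → ∃ c' : ℝ, 0 < c' ∧
    ∀ (V : Type) [Fintype V] (A : Finset V) (H : Finset (Fin (j+1) → V)) (s : ℕ) (L q : ℝ),
      0 < s → 0 < L → 0 < q → q * Fintype.card V = s → 1 ≤ q ^ j * L → q ^ j * L ≤ B →
      (∀ x ∈ H, ∀ i, x i ∈ A) → c * L * Fintype.card V ≤ H.card →
      (∀ T : Finset (Fin (j+1)), T.Nonempty → ∀ z, (hdeg H T z : ℝ) ≤ K * q ^ (T.card - 1) * L) →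
      ∃ (F : Finset V → Finset V) (σ : Finset V → Finset V), Consist F σ ∧
        ∀ I : Finset V, I.Nonempty → (∀ x ∈ H, ¬ ∀ i, x i ∈ I) → (F I).card ≤ j * s ∧
          σ I ⊆ A ∧ (∀ v ∈ I, v ∉ σ I) ∧ c' * Fintype.card V ≤ (σ I).card := by
  induction j with
  | zero =>
    intro c K B hc hK hB
    refine ⟨c, hc, ?_⟩
    intro V _ A H s L q hs hL hq hqs h1 hB' hA hH hdegH
    refine ⟨_, _, Consist.pure (H.image fun x => x 0), fun I hI hind => ⟨by simp, ?_, ?_, ?_⟩⟩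
    · intro v hv
      obtain ⟨x, hx, rfl⟩ := mem_image.1 hv
      exact hA x hx 0
    · intro v hv hv2
      obtain ⟨x, hx, rfl⟩ := mem_image.1 hv2
      exact hind x hx fun i => by rw [show i = 0 from Fin.fin_one_eq_zero i]; exact hv
    · rw [card_image_of_injective]
      · refine le_trans ?_ hH
        gcongr
        simp at h1
        nlinarith
      · intro x y hxy
        funext i
        rw [show i = 0 from Fin.fin_one_eq_zero i]; exact hxy
  | succ j ih =>
    intro c K B hc hK hB
    set κ : ℝ := min (1/4) (1 / (4 * K * B)) with hκ
    have hκ0 : 0 < κ := by rw [hκ]; positivity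
    have hκ1 : κ ≤ 1/4 := min_le_left _ _
    have hκ2 : κ * (K * B) ≤ 1/4 := by
      have : κ ≤ 1 / (4 * K * B) := min_le_right _ _
      rw [le_div_iff₀ (by positivity)] at this
      linarith
    obtain ⟨c', hc', hih⟩ := ih (κ * c) ((2 ^ (j+1+2) * κ + 1) * K) B (by positivity) (by positivity) hB
    refine ⟨min c' (c / (4 * K)), by positivity, ?_⟩
    intro V _ A H s L q hs hL hq hqs h1 hB' hA hH hdegH
    have hn : 0 < (Fintype.card V : ℝ) := by
      have : (0:ℝ) < s := by exact_mod_cast hs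
      rw [← hqs] at this
      exact pos_of_mul_pos_right this hq.le
    have hH0 : (0:ℝ) < H.card := lt_of_lt_of_le (by positivity) hH
    obtain ⟨F1, σ1, hc1, hp1⟩ := level_step (V := V) (j := j+1) (by omega)
      (thr := fun m => 2 ^ (j+1+2) * κ * q * (K * q ^ (m - 1) * L))
      (D := fun m => K * q ^ (m-1) * L) (fun m => by positivity) A hA hdegH (fun m => by positivity) s hs
      (κ * q * H.card) (by positivity) (fun m _ _ => by apply le_of_eq; ring)
      (by
        simp only [Nat.add_sub_cancel]
        have : κ * q * H.card * (K * q ^ j * L) = κ * (K * (q ^ (j+1) * L)) * H.card := by ring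
        rw [this]
        have : κ * (K * (q ^ (j+1) * L)) ≤ 1/4 := le_trans (by gcongr) hκ2
        nlinarith)
      (by
        have hs' : (0:ℝ) < s := by exact_mod_cast hs
        have : (Fintype.card V : ℝ) * (κ * q * H.card / s) = κ * H.card := by
          field_simp
          rw [← hqs]; ring
        rw [this]; nlinarith)
    -- second stage
    have ih2 : ∀ a : Finset (Fin (j+1) → V) × Finset V, ∃ (F : Finset V → Finset V) (σ : Finset V → Finset V),
        Consist F σ ∧ ((∀ x ∈ a.1, ∀ i, x i ∈ A) →
          (∀ T : Finset (Fin (j+1)), T.Nonempty → ∀ z,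
            (hdeg a.1 T z : ℝ) ≤ ((2 ^ (j+1+2) * κ + 1) * K) * q ^ (T.card - 1) * (q * L)) →
          ((κ * q * H.card ≤ a.1.card) ∧ ∀ I : Finset V, I.Nonempty → (∀ x ∈ a.1, ¬ ∀ i, x i ∈ I) →
            (F I).card ≤ j * s ∧
          σ I ⊆ A ∧ (∀ v ∈ I, v ∉ σ I) ∧ c' * Fintype.card V ≤ (σ I).card) ∨
          (¬ (κ * q * H.card ≤ a.1.card) ∧ ∀ I, F I = ∅ ∧ σ I = a.2)) := by
      intro a
      by_cases hbig : κ * q * H.card ≤ a.1.card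
      · by_cases hgood : (∀ x ∈ a.1, ∀ i, x i ∈ A) ∧ (∀ T : Finset (Fin (j+1)), T.Nonempty → ∀ z,
            (hdeg a.1 T z : ℝ) ≤ ((2 ^ (j+1+2) * κ + 1) * K) * q ^ (T.card - 1) * (q * L))
        · obtain ⟨F, σ, b1, b2⟩ := hih V A a.1 s (q * L) q hs (by positivity) hq hqs
            (by rw [← mul_assoc, ← pow_succ]; exact h1) (by rw [← mul_assoc, ← pow_succ]; exact hB')
            hgood.1 (by
              refine le_trans ?_ hbig
              calc κ * c * (q * L) * Fintype.card V = κ * q * (c * L * Fintype.card V) := by ring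
                _ ≤ _ := by gcongr) hgood.2
          exact ⟨F, σ, b1, fun _ _ => Or.inl ⟨hbig, b2⟩⟩
        · exact ⟨_, _, Consist.pure ∅, fun h1 h2 => absurd ⟨h1, h2⟩ hgood⟩
      · exact ⟨_, _, Consist.pure a.2, fun _ _ => Or.inr ⟨hbig, fun I => ⟨rfl, rfl⟩⟩⟩
    choose F2 σ2 hc2 hp2 using ih2
    refine ⟨_, _, hc1.bind hc2, fun I hI hind => ?_⟩
    obtain ⟨q1, q2, q3, q4, q5⟩ := hp1 I hI hind
    have hd : ∀ T : Finset (Fin (j+1)), T.Nonempty → ∀ z,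
            (hdeg (σ1 I).1 T z : ℝ) ≤ ((2 ^ (j+1+2) * κ + 1) * K) * q ^ (T.card - 1) * (q * L) := by
      intro T hT z
      refine (q4 T hT z).trans (le_of_eq ?_)
      have : T.card + 1 - 1 = (T.card - 1) + 1 := by have := hT.card_pos; omega
      simp only [this]
      ring
    have hcard : ∀ m, m ≤ j * s → (F1 I).card + m ≤ (j+1) * s := by
      intro m hm; rw [add_mul]; omega
    rcases hp2 (σ1 I) q3 hd with ⟨-, hh⟩ | ⟨hsm, hh⟩
    · obtain ⟨w1, w2, w3, w4⟩ := hh I hI q2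
      refine ⟨(card_union_le _ _).trans (hcard _ w1), w2, w3, le_trans ?_ w4⟩
      gcongr
      exact min_le_left _ _
    · obtain ⟨e1, e2⟩ := hh I
      rcases q5 with q5 | ⟨w1, w2, w3⟩
      · exact absurd q5 hsm
      · simp only [e1, e2, union_empty]
        refine ⟨by simpa using hcard 0 (by omega), w1, w2, ?_⟩
        simp only [Nat.sub_self, pow_zero, mul_one] at w3
        calc min c' (c / (4 * K)) * Fintype.card V ≤ (c / (4 * K)) * Fintype.card V := by
              gcongr; exact min_le_right _ _
          _ = (c * L * Fintype.card V) / 4 / (K * L) := by field_simp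
          _ ≤ H.card / 4 / (K * L) := by gcongr
          _ ≤ _ := by rw [div_le_iff₀ (by positivity)]; exact w3

end containers2

section counting

lemma rounds (j : ℕ) (c K B : ℝ) (hc : 0 < c) (hK : 0 < K) (hB : 0 < B) : ∃ c' : ℝ, 0 < c' ∧
    ∀ (V : Type) [Fintype V] (H : Finset (Fin (j+1) → V)) (s : ℕ) (L q ε : ℝ),
      0 < s → 0 < L → 0 < q → q * Fintype.card V = s → 1 ≤ q ^ j * L → q ^ j * L ≤ B →
      (∀ A : Finset V, ε * Fintype.card V ≤ A.card →
        c * L * Fintype.card V ≤ (H.filter fun x => ∀ i, x i ∈ A).card) →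
      (∀ T : Finset (Fin (j+1)), T.Nonempty → ∀ z, (hdeg H T z : ℝ) ≤ K * q ^ (T.card - 1) * L) →
      ∀ (m : ℕ) (A : Finset V), (A.card : ℝ) ≤ ε * Fintype.card V + m * (c' * Fintype.card V) →
      ∃ (F : Finset V → Finset V) (σ : Finset V → Finset V), Consist F σ ∧
        ∀ I : Finset V, I.Nonempty → (∀ x ∈ H, ¬ ∀ i, x i ∈ I) → I ⊆ A → (F I).card ≤ m * (j * s) ∧
          I ⊆ σ I ∧ ((σ I).card : ℝ) ≤ ε * Fintype.card V := by
  obtain ⟨c', hc', hlev⟩ := levels j c K B hc hK hB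
  refine ⟨c', hc', ?_⟩
  intro V _ H s L q ε hs hL hq hqs h1 hB' hsup hdegH m
  induction m with
  | zero =>
    intro A hA
    refine ⟨_, _, Consist.pure A, fun I hI hind hIA => ⟨by simp, hIA, by simpa using hA⟩⟩
  | succ m ih =>
    intro A hA
    by_cases hsm : (A.card : ℝ) ≤ ε * Fintype.card V
    · exact ⟨_, _, Consist.pure A, fun I hI hind hIA => ⟨by simp, hIA, hsm⟩⟩
    push Not at hsm
    obtain ⟨F1, σ1, hc1, hp1⟩ := hlev V A (H.filter fun x => ∀ i, x i ∈ A) s L q hs hL hq hqs h1 hB'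
      (fun x hx => (mem_filter.1 hx).2) (hsup A hsm.le) (fun T hT z => by
        refine le_trans ?_ (hdegH T hT z)
        exact_mod_cast hdeg_mono (filter_subset _ _) T z)
    have ih2 : ∀ D : Finset V, ∃ (F : Finset V → Finset V) (σ : Finset V → Finset V), Consist F σ ∧
        (((A \ D).card : ℝ) ≤ ε * Fintype.card V + m * (c' * Fintype.card V) →
        ∀ I : Finset V, I.Nonempty → (∀ x ∈ H, ¬ ∀ i, x i ∈ I) → I ⊆ A \ D → (F I).card ≤ m * (j * s) ∧
          I ⊆ σ I ∧ ((σ I).card : ℝ) ≤ ε * Fintype.card V) := by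
      intro D
      by_cases hD : (((A \ D).card : ℝ) ≤ ε * Fintype.card V + m * (c' * Fintype.card V))
      · obtain ⟨F, σ, a, b⟩ := ih (A \ D) hD
        exact ⟨F, σ, a, fun _ => b⟩
      · exact ⟨_, _, Consist.pure ∅, fun h => absurd h hD⟩
    choose F2 σ2 hc2 hp2 using ih2
    refine ⟨_, _, hc1.bind hc2, fun I hI hind hIA => ?_⟩
    obtain ⟨q1, q2, q3, q4⟩ := hp1 I hI (fun x hx => hind x (mem_filter.1 hx).1)
    have hcd : ((A \ σ1 I).card : ℝ) = A.card - (σ1 I).card := by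
      rw [card_sdiff_of_subset q2, Nat.cast_sub (card_le_card q2)]
    obtain ⟨w1, w2, w3⟩ := hp2 (σ1 I) (by
      rw [hcd]; push_cast at hA; linarith) I hI hind (fun v hv => mem_sdiff.2 ⟨hIA hv, q3 v hv⟩)
    refine ⟨(card_union_le _ _).trans ?_, w2, w3⟩
    rw [add_mul]; omega

lemma count_free {V : Type} [Fintype V] (P : Finset V → Prop) (F σ : Finset V → Finset V)
    (hc : Consist F σ) (S t M : ℕ) (hSt : S ≤ t)
    (h : ∀ I : Finset V, I.card = t → P I → (F I).card ≤ S ∧ I ⊆ σ I ∧ (σ I).card ≤ M) :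
    (univ.filter fun X : Finset V => X.card = t ∧ P X).card ≤
      (Fintype.card V).choose S * M.choose (t - S) := by
  let fam : Finset V → Finset (Finset V) := fun J =>
    if (σ J).card ≤ M then ((σ J).powersetCard (t - S)).image (fun Y => J ∪ Y) else ∅
  have hsub : (univ.filter fun X : Finset V => X.card = t ∧ P X) ⊆
      ((univ : Finset V).powersetCard S).biUnion fam := by
    intro X hX
    obtain ⟨-, hXt, hXP⟩ := mem_filter.1 hX
    obtain ⟨h1, h2, h3⟩ := h X hXt hXP
    obtain ⟨J, hJ1, hJ2, hJ3⟩ := exists_subsuperset_card_eq (hc.1 X) h1 (by rw [hXt]; exact hSt)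
    obtain ⟨-, e⟩ := hc.2 X J hJ1 hJ2
    rw [mem_biUnion]
    refine ⟨J, mem_powersetCard.2 ⟨subset_univ _, hJ3⟩, ?_⟩
    simp only [fam, e, h3, if_true]
    rw [mem_image]
    refine ⟨X \ J, mem_powersetCard.2 ⟨sdiff_subset.trans h2, ?_⟩, union_sdiff_of_subset hJ2⟩
    rw [card_sdiff_of_subset hJ2, hXt, hJ3]
  refine (card_le_card hsub).trans ?_
  refine (card_biUnion_le_card_mul _ _ (M.choose (t - S)) ?_).trans ?_
  · intro J _
    simp only [fam]
    split_ifs with hJ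
    · refine card_image_le.trans ?_
      rw [card_powersetCard]
      exact Nat.choose_le_choose _ hJ
    · simp
  · rw [card_powersetCard, card_univ]

lemma choose_ratio (m M u : ℕ) (h : m ≤ M) : m.choose u * M ^ u ≤ M.choose u * m ^ u := by
  have : ∀ u, m.descFactorial u * M ^ u ≤ M.descFactorial u * m ^ u := by
    intro u
    induction u with
    | zero => simp
    | succ u ih =>
      rw [Nat.descFactorial_succ, Nat.descFactorial_succ, pow_succ, pow_succ]
      have h2 : (m - u) * M ≤ (M - u) * m := by
        rcases le_total m u with hu | hu
        · simp [Nat.sub_eq_zero_of_le hu]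
        · obtain ⟨a, rfl⟩ := Nat.exists_eq_add_of_le hu
          obtain ⟨b, rfl⟩ := Nat.exists_eq_add_of_le h
          have : u + a + b - u = a + b := by omega
          rw [this, Nat.add_sub_cancel_left]
          nlinarith [Nat.zero_le (b * u)]
      calc (m - u) * m.descFactorial u * (M ^ u * M) = (m.descFactorial u * M ^ u) * ((m - u) * M) := by ring
        _ ≤ (M.descFactorial u * m ^ u) * ((M - u) * m) := Nat.mul_le_mul ih h2
        _ = _ := by ring
  have h1 := this u
  rw [Nat.descFactorial_eq_factorial_mul_choose, Nat.descFactorial_eq_factorial_mul_choose, mul_assoc, mul_assoc] at h1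
  exact Nat.le_of_mul_le_mul_left h1 (Nat.factorial_pos u)

lemma choose_ratio2 (n M S W : ℕ) (h : W + S ≤ M) : n.choose S * W ^ S ≤ M.choose S * n ^ S := by
  have h1 : n.descFactorial S ≤ n ^ S := Nat.descFactorial_le_pow n S
  have h2 : W ^ S ≤ M.descFactorial S := by
    refine le_trans ?_ (Nat.pow_sub_le_descFactorial M S)
    exact Nat.pow_le_pow_left (by omega) S
  have h3 : n.descFactorial S * W ^ S ≤ M.descFactorial S * n ^ S := by
    calc _ ≤ n ^ S * M.descFactorial S := Nat.mul_le_mul h1 h2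
      _ = _ := mul_comm _ _
  rw [Nat.descFactorial_eq_factorial_mul_choose, Nat.descFactorial_eq_factorial_mul_choose, mul_assoc, mul_assoc] at h3
  exact Nat.le_of_mul_le_mul_left h3 (Nat.factorial_pos S)

/-- main binomial inequality; `W` is a lower bound for `M - S`. -/
lemma choose_final (n m M S t W : ℕ) (hS : 2 * S ≤ t) (hW : W + S ≤ M) (hmW : m ≤ W)
    (hW0 : 0 < W) (hn : W ≤ n) (hkey : 4 * (n * m) ≤ W * W) :
    n.choose S * m.choose (t - S) ≤ M.choose t := by
  -- multiply by C(t,S)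
  rcases lt_or_ge M t with hMt | hMt
  · have : m < t - S := by omega
    simp [Nat.choose_eq_zero_of_lt this]
  have e := Nat.choose_mul (n := M) (k := t) (s := S) (by omega)
  have h1 := choose_ratio2 n M S W hW
  have h2 := choose_ratio m (M - S) (t - S) (by omega)
  have h2' : m.choose (t - S) * W ^ (t - S) ≤ (M - S).choose (t - S) * m ^ (t - S) := by
    have h3 := choose_ratio m W (t - S) hmW
    exact h3.trans (Nat.mul_le_mul_right _ (Nat.choose_le_choose _ (by omega)))
  have h4 : t.choose S ≤ 2 ^ t := Nat.choose_le_two_pow t S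
  have h5 : 2 ^ t * (n ^ S * m ^ (t - S)) ≤ W ^ S * W ^ (t - S) := by
    obtain ⟨a, rfl⟩ : ∃ a, t = 2 * S + a := ⟨t - 2 * S, by omega⟩
    have e1 : 2 * S + a - S = S + a := by omega
    rw [e1]
    have h6 : 2 * m ≤ W := by
      have : 4 * (W * m) ≤ W * W := le_trans (by gcongr) hkey
      nlinarith
    calc 2 ^ (2 * S + a) * (n ^ S * m ^ (S + a)) = (4 * (n * m)) ^ S * (2 * m) ^ a := by
          rw [pow_add, pow_mul, mul_pow, mul_pow, mul_pow, pow_add]; ring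
      _ ≤ (W * W) ^ S * W ^ a := by gcongr
      _ = _ := by rw [mul_pow, pow_add]; ring
  have hWp : 0 < W ^ S * W ^ (t - S) := by positivity
  have hts : 0 < t.choose S := Nat.choose_pos (by omega)
  have : (n.choose S * m.choose (t - S)) * (W ^ S * W ^ (t - S)) * t.choose S ≤
      M.choose t * (W ^ S * W ^ (t - S)) * t.choose S := by
    calc _ = (n.choose S * W ^ S) * (m.choose (t - S) * W ^ (t - S)) * t.choose S := by ring
      _ ≤ (M.choose S * n ^ S) * ((M - S).choose (t - S) * m ^ (t - S)) * 2 ^ t := by gcongr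
      _ = (M.choose S * (M - S).choose (t - S)) * (2 ^ t * (n ^ S * m ^ (t - S))) := by ring
      _ ≤ (M.choose S * (M - S).choose (t - S)) * (W ^ S * W ^ (t - S)) := by gcongr
      _ = _ := by rw [← e]; ring
  have := Nat.le_of_mul_le_mul_right this hts
  exact Nat.le_of_mul_le_mul_right this hWp

end counting

section cycles

def LowReg {V : Type} (γ η : ℝ) (E : V → V → Prop) (Q R : Finset V) : Prop :=
  ∀ X ⊆ Q, ∀ Y ⊆ R, η * Q.card ≤ X.card → η * R.card ≤ Y.card →
    γ * X.card * Y.card ≤ ((X ×ˢ Y).filter fun p => E p.1 p.2).card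

lemma LowReg.flip {V : Type} {γ η : ℝ} {E : V → V → Prop} {Q R : Finset V} (h : LowReg γ η E Q R) :
    LowReg γ η (fun x y => E y x) R Q := by
  intro X hX Y hY h1 h2
  have := h Y hY X hX h2 h1
  have e : ((X ×ˢ Y).filter fun p => E p.2 p.1).card = ((Y ×ˢ X).filter fun p => E p.1 p.2).card := by
    apply card_bij (fun p _ => (p.2, p.1))
    · intro p hp
      simp only [mem_filter, mem_product] at hp ⊢
      tauto
    · intro p _ q _ h
      simp only [Prod.mk.injEq] at h
      exact Prod.ext h.2 h.1
    · intro p hp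
      simp only [mem_filter, mem_product] at hp
      exact ⟨(p.2, p.1), by simp only [mem_filter, mem_product]; tauto, rfl⟩
  rw [e]
  linarith

lemma LowReg.typical {V : Type} {γ η : ℝ} {E : V → V → Prop} {Q R : Finset V} (h : LowReg γ η E Q R)
    (hη : 0 < η) (hR : R.Nonempty) (X : Finset V) (hX : X ⊆ Q) (hX2 : η * Q.card ≤ X.card) :
    ((R.filter fun w => ¬ (γ * X.card ≤ (X.filter fun x => E x w).card)).card : ℝ) < η * R.card := by
  by_contra hcon
  rw [not_lt] at hcon
  set bad := (R.filter fun w => ¬ (γ * X.card ≤ (X.filter fun x => E x w).card)) with hbad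
  have h1 := h X hX bad (filter_subset _ _) hX2 hcon
  have hRpos : (0:ℝ) < R.card := by exact_mod_cast hR.card_pos
  have hne : bad.Nonempty := by
    rw [← card_pos]
    have : (0:ℝ) < bad.card := lt_of_lt_of_le (by positivity) hcon
    exact_mod_cast this
  have h2 : ((X ×ˢ bad).filter fun p => E p.1 p.2).card = ∑ w ∈ bad, (X.filter fun x => E x w).card := by
    rw [card_filter, sum_product_right]
    apply sum_congr rfl
    intro w _
    rw [card_filter]
  rw [h2] at h1
  push_cast at h1
  have h3 : ∑ w ∈ bad, ((X.filter fun x => E x w).card : ℝ) < ∑ w ∈ bad, γ * X.card := by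
    apply sum_lt_sum_of_nonempty hne
    intro w hw
    have := (mem_filter.1 hw).2
    push Not at this
    exact this
  rw [sum_const, nsmul_eq_mul] at h3
  linarith

lemma LowReg.typical' {V : Type} {γ η : ℝ} {E : V → V → Prop} {Q R : Finset V} (h : LowReg γ η E Q R)
    (hη : 0 < η) (hR : R.Nonempty) (X : Finset V) (hX : X ⊆ Q) (hX2 : η * Q.card ≤ X.card) :
    (1 - η) * R.card ≤ ((R.filter fun w => (γ * X.card ≤ (X.filter fun x => E x w).card)).card : ℝ) := by
  have h1 := h.typical hη hR X hX hX2
  have h2 := card_filter_add_card_filter_not (s := R) (fun w => (γ * X.card ≤ (X.filter fun x => E x w).card))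
  have h3 : ((R.filter fun w => (γ * X.card ≤ (X.filter fun x => E x w).card)).card : ℝ) +
    ((R.filter fun w => ¬ (γ * X.card ≤ (X.filter fun x => E x w).card)).card : ℝ) = R.card := by exact_mod_cast h2
  linarith

noncomputable def walks {V : Type} [Fintype V] (l : ℕ) (E : ℕ → V → V → Prop) (X Y : Finset V) :
    Finset (Fin (l+1) → V) :=
  univ.filter fun v => v 0 ∈ X ∧ v (Fin.last l) ∈ Y ∧ ∀ j : Fin l, E j (v j.castSucc) (v j.succ)

lemma walks_count {V : Type} [Fintype V] {γ η : ℝ} (hγ : 0 < γ) (hγ1 : γ ≤ 1) (hη : 0 < η) (hη1 : η ≤ 1/3)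
    (m : ℝ) (hm : 0 < m) (l : ℕ) :
    ∀ (E : ℕ → V → V → Prop) (Q : ℕ → Finset V), (∀ j, j ≤ l + 1 → m ≤ (Q j).card) →
      (∀ j, j < l + 1 → LowReg γ η (E j) (Q j) (Q (j+1))) →
      ∀ X ⊆ Q 0, ∀ Y ⊆ Q (l+1), η * (Q 0).card ≤ X.card → η * (Q (l+1)).card ≤ Y.card →
      (γ * η * m) ^ (l+2) ≤ (walks (l+1) E X Y).card := by
  induction l with
  | zero =>
    intro E Q hQ hE X hX Y hY hX2 hY2
    have h1 := hE 0 (by omega) X hX Y hY hX2 hY2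
    have h2 : ((X ×ˢ Y).filter fun p => E 0 p.1 p.2).card ≤ (walks (0+1) E X Y).card := by
      apply card_le_card_of_injOn (fun p => ![p.1, p.2])
      · intro p hp
        have hp := mem_filter.1 (mem_coe.1 hp)
        have := mem_product.1 hp.1
        apply mem_coe.2
        simp only [walks, mem_filter, mem_univ, true_and]
        refine ⟨this.1, this.2, fun j => ?_⟩
        have : j = 0 := Fin.fin_one_eq_zero j
        subst this
        exact hp.2
      · intro p _ q _ h
        exact Prod.ext (congrFun h 0) (congrFun h 1)
    have h3 : (((X ×ˢ Y).filter fun p => E 0 p.1 p.2).card : ℝ) ≤ (walks (0+1) E X Y).card := by exact_mod_cast h2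
    refine le_trans ?_ (h1.trans h3)
    have hx : η * m ≤ X.card := le_trans (by gcongr; exact hQ 0 (by omega)) hX2
    have hy : η * m ≤ Y.card := le_trans (by gcongr; exact hQ (0+1) (by omega)) hY2
    calc (γ * η * m) ^ (0+2) = γ * (γ * ((η * m) * (η * m))) := by ring
      _ ≤ γ * (1 * ((η * m) * (η * m))) := by gcongr
      _ ≤ γ * (1 * (X.card * Y.card)) := by gcongr
      _ = _ := by ring
  | succ l ih =>
    intro E Q hQ hE X hX Y hY hX2 hY2
    set X' := (Q 1).filter fun w => (γ * X.card ≤ (X.filter fun x => E 0 x w).card) with hX'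
    have hQ1 : (Q 1).Nonempty := by
      rw [← card_pos]
      have := lt_of_lt_of_le hm (hQ 1 (by omega))
      exact_mod_cast this
    have hX'c : (1 - η) * (Q 1).card ≤ X'.card := (hE 0 (by omega)).typical' hη hQ1 X hX hX2
    have h1 := ih (fun j => E (j+1)) (fun j => Q (j+1)) (fun j hj => hQ (j+1) (by omega))
      (fun j hj => hE (j+1) (by omega)) X' (filter_subset _ _) Y hY (by
        refine le_trans ?_ hX'c
        gcongr
        linarith) hY2
    have h2 : ∑ w ∈ walks (l+1) (fun j => E (j+1)) X' Y, (X.filter fun x => E 0 x (w 0)).card ≤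
        (walks (l+1+1) E X Y).card := by
      rw [← card_sigma]
      apply card_le_card_of_injOn (fun p => (Fin.cons p.2 p.1 : Fin (l+1+1+1) → V))
      · rintro ⟨w, x⟩ hp
        have hp := mem_sigma.1 (mem_coe.1 hp)
        obtain ⟨hp1, hp2⟩ := hp
        simp only [walks, mem_filter, mem_univ, true_and] at hp1 hp2
        apply mem_coe.2
        simp only [walks, mem_filter, mem_univ, true_and]
        refine ⟨by simpa using hp2.1, by simpa [← Fin.succ_last] using hp1.2.1, fun j => ?_⟩
        refine Fin.cases ?_ (fun j => ?_) j
        · simpa using hp2.2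
        · have := hp1.2.2 j
          simpa [Fin.castSucc_succ] using this
      · rintro ⟨w, x⟩ _ ⟨w', x'⟩ _ h
        obtain ⟨h1, h2⟩ := Fin.cons_inj.1 h
        subst h1; subst h2; rfl
    have h3 : (∑ w ∈ walks (l+1) (fun j => E (j+1)) X' Y, ((X.filter fun x => E 0 x (w 0)).card : ℝ)) ≤
        (walks (l+1+1) E X Y).card := by exact_mod_cast h2
    refine le_trans ?_ h3
    have hx : η * m ≤ X.card := le_trans (by gcongr; exact hQ 0 (by omega)) hX2
    calc (γ * η * m) ^ (l+1+2) = (γ * η * m) ^ (l+2) * (γ * (η * m)) := by ring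
      _ ≤ ((walks (l+1) (fun j => E (j+1)) X' Y).card : ℝ) * (γ * X.card) := by gcongr
      _ = (walks (l+1) (fun j => E (j+1)) X' Y).card • (γ * X.card) := by rw [nsmul_eq_mul]
      _ ≤ _ := by
        apply card_nsmul_le_sum
        intro w hw
        have := (mem_filter.1 hw).2.1
        exact (mem_filter.1 this).2

noncomputable def cyc {V : Type} [Fintype V] (k : ℕ) (E : ℕ → V → V → Prop) : Finset (Fin (k+1) → V) :=
  univ.filter fun v => v 0 = v (Fin.last k) ∧ ∀ j : Fin k, E j (v j.castSucc) (v j.succ)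

lemma cyc_count {V : Type} [Fintype V] {γ η : ℝ} (hγ1 : γ ≤ 1) (hη : 0 < η) (hη1 : η ≤ 1/3) (hηγ : η ≤ γ)
    (m : ℝ) (hm : 0 < m) (l : ℕ) (E : ℕ → V → V → Prop) (Q : ℕ → Finset V) (hQ : ∀ j, m ≤ (Q j).card)
    (hE : ∀ j, j < l + 3 → LowReg γ η (E j) (Q j) (Q (j+1))) (hQ0 : Q (l+3) = Q 0) :
    (γ * η * m) ^ (l+3) ≤ (cyc (l+3) E).card := by
  have hγ : 0 < γ := by linarith
  have hne : ∀ j, (Q j).Nonempty := fun j => by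
    rw [← card_pos]
    have := lt_of_lt_of_le hm (hQ j)
    exact_mod_cast this
  have hself : ∀ j, η * (Q j).card ≤ (Q j).card := fun j => by
    have : (0:ℝ) ≤ (Q j).card := by positivity
    nlinarith
  have t1 := (hE 0 (by omega)).flip.typical hη (hne 0) (Q 1) Subset.rfl (hself 1)
  have t2 := (hE (l+2) (by omega)).typical hη (hne _) (Q (l+2)) Subset.rfl (hself (l+2))
  rw [show l + 2 + 1 = l + 3 from rfl, hQ0] at t2
  set N1 : V → Finset V := fun v => (Q 1).filter fun w => E 0 v w with hN1
  set N2 : V → Finset V := fun v => (Q (l+2)).filter fun w => E (l+2) w v with hN2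
  set Ty := (Q 0).filter fun v => γ * (Q 1).card ≤ (N1 v).card ∧ γ * (Q (l+2)).card ≤ (N2 v).card with hTy
  have hTyc : η * m ≤ Ty.card := by
    have hsub : Q 0 ⊆ Ty ∪ ((Q 0).filter (fun v => ¬ (γ * (Q 1).card ≤ (N1 v).card)) ∪
        (Q 0).filter (fun v => ¬ (γ * (Q (l+2)).card ≤ (N2 v).card))) := by
      intro v hv
      simp only [hTy, mem_union, mem_filter]
      tauto
    have hc := (card_le_card hsub).trans ((card_union_le _ _).trans (Nat.add_le_add_left (card_union_le _ _) _))
    have hc' : ((Q 0).card : ℝ) ≤ Ty.card + (((Q 0).filter (fun v => ¬ (γ * (Q 1).card ≤ (N1 v).card))).card +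
        ((Q 0).filter (fun v => ¬ (γ * (Q (l+2)).card ≤ (N2 v).card))).card) := by exact_mod_cast hc
    have := hQ 0
    have t1' : (((Q 0).filter (fun v => ¬ (γ * (Q 1).card ≤ (N1 v).card))).card : ℝ) < η * (Q 0).card := t1
    have t2' : (((Q 0).filter (fun v => ¬ (γ * (Q (l+2)).card ≤ (N2 v).card))).card : ℝ) < η * (Q 0).card := t2
    nlinarith
  have h2 : ∑ v ∈ Ty, (walks (l+1) (fun j => E (j+1)) (N1 v) (N2 v)).card ≤ (cyc (l+3) E).card := by
    rw [← card_sigma]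
    apply card_le_card_of_injOn (fun p => (Fin.cons p.1 (Fin.snoc p.2 p.1 : Fin (l+1+1+1) → V) : Fin (l+3+1) → V))
    · rintro ⟨v, w⟩ hp
      obtain ⟨hp1, hp2⟩ := mem_sigma.1 (mem_coe.1 hp)
      simp only [walks, mem_filter, mem_univ, true_and] at hp1 hp2
      obtain ⟨a1, a2, a3⟩ := hp2
      have a1 := (mem_filter.1 a1).2
      have a2 := (mem_filter.1 a2).2
      apply mem_coe.2
      simp only [cyc, mem_filter, mem_univ, true_and]
      refine ⟨?_, fun j => ?_⟩
      · rw [Fin.cons_zero, ← Fin.succ_last, Fin.cons_succ, Fin.snoc_last]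
      · refine Fin.cases ?_ (fun j => ?_) j
        · have : (Fin.snoc w v : Fin (l+1+1+1) → V) 0 = w 0 := by
            rw [← Fin.castSucc_zero, Fin.snoc_castSucc]
          simpa [this] using a1
        · rw [Fin.cons_succ, Fin.castSucc_succ, Fin.cons_succ]
          refine Fin.lastCases ?_ (fun j => ?_) j
          · rw [Fin.snoc_castSucc, Fin.succ_last, Fin.snoc_last]
            simpa using a2
          · have := a3 j
            rw [Fin.snoc_castSucc, Fin.succ_castSucc, Fin.snoc_castSucc]
            simpa using this
    · rintro ⟨w, x⟩ _ ⟨w', x'⟩ _ h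
      obtain ⟨h1, h2⟩ := Fin.cons_inj.1 h
      simp only at h1
      subst h1
      have : x = x' := by
        funext j
        have := congrFun h2 j.castSucc
        simpa [Fin.snoc_castSucc] using this
      subst this; rfl
  have h3 : (∑ v ∈ Ty, ((walks (l+1) (fun j => E (j+1)) (N1 v) (N2 v)).card : ℝ)) ≤ (cyc (l+3) E).card := by
    exact_mod_cast h2
  refine le_trans ?_ h3
  calc (γ * η * m) ^ (l+3) = γ * (η * m * (γ * η * m) ^ (l+2)) := by ring
    _ ≤ 1 * (η * m * (γ * η * m) ^ (l+2)) := by gcongr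
    _ ≤ 1 * (Ty.card * (γ * η * m) ^ (l+2)) := by gcongr
    _ = Ty.card • ((γ * η * m) ^ (l+2)) := by rw [nsmul_eq_mul, one_mul]
    _ ≤ _ := by
      apply card_nsmul_le_sum
      intro v hv
      obtain ⟨b0, b1, b2⟩ := mem_filter.1 hv
      refine walks_count hγ hγ1 hη hη1 m hm l (fun j => E (j+1)) (fun j => Q (j+1)) (fun j hj => hQ _)
        (fun j hj => hE (j+1) (by omega)) (N1 v) (filter_subset _ _) (N2 v) (filter_subset _ _) ?_ ?_
      · refine le_trans ?_ b1
        gcongr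
      · refine le_trans ?_ b2
        gcongr

end cycles
section regclean

lemma reg_clean (k : ℕ) (ε d θ : ℝ) (hε : 0 < ε) (hd : 0 < d) (hθ : 0 < θ) : ∃ M n1 : ℕ, 0 < M ∧
    ∀ (α : Type) [Fintype α] [Nonempty α] (G : SimpleGraph α) (κ : α → Fin k), n1 ≤ Fintype.card α →
    ∃ (part : α → Finset α) (Bad : Finset (α × α)), (∀ x, x ∈ part x) ∧
      (∀ x, (Fintype.card α : ℝ) / (2 * M) ≤ (part x).card) ∧
      ((Bad.card : ℝ) ≤ (4 * ε + 5 * d) * (Fintype.card α : ℝ) ^ 2) ∧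
      (∀ x y, G.Adj x y → (x, y) ∉ Bad → G.IsUniform ε (part x) (part y) ∧
        d ≤ G.edgeDensity (part x) (part y)) ∧
      ((univ.filter fun x => (((part x).filter fun y => κ y = κ x).card : ℝ) < θ * (part x).card).card : ℝ)
        ≤ k * θ * Fintype.card α := by
  refine ⟨SzemerediRegularity.bound ε ⌈4 / d⌉₊, ⌈4 / d⌉₊, SzemerediRegularity.bound_pos _ _, ?_⟩
  intro α _ _ G κ hn
  obtain ⟨P, hP, hl, hb, hu⟩ := szemeredi_regularity G hε hn
  have hN : 0 < Fintype.card α := Fintype.card_pos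
  have hparts0 : 0 < P.parts.card := (P.parts_nonempty (by
    simpa using (univ_nonempty (α := α)).ne_empty)).card_pos
  have h4 : 4 / d ≤ (P.parts.card : ℝ) := (Nat.le_ceil _).trans (by exact_mod_cast hl)
  have hx : ∀ x, x ∈ P.part x := fun x => P.mem_part (mem_univ x)
  have hxp : ∀ x, P.part x ∈ P.parts := fun x => P.part_mem.2 (mem_univ x)
  refine ⟨P.part, ((P.nonUniforms G ε).biUnion fun (U, V) ↦ U ×ˢ V) ∪ P.parts.biUnion offDiag ∪
    ((P.sparsePairs G d).biUnion fun (U, V) ↦ G.interedges U V), hx, ?_, ?_, ?_, ?_⟩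
  · intro x
    have h1 := hP.average_le_card_part (hxp x)
    rw [card_univ] at h1
    have h2 : P.parts.card ≤ Fintype.card α := by simpa using P.card_parts_le_card
    have h3 : 1 ≤ Fintype.card α / P.parts.card := by
      rw [Nat.le_div_iff_mul_le hparts0]; omega
    have h5 := Nat.div_add_mod (Fintype.card α) P.parts.card
    have h6 := Nat.mod_lt (Fintype.card α) hparts0
    have h7 : Fintype.card α ≤ 2 * SzemerediRegularity.bound ε ⌈4 / d⌉₊ * (P.part x).card := by
      calc Fintype.card α ≤ 2 * P.parts.card * (Fintype.card α / P.parts.card) := by nlinarith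
        _ ≤ _ := by gcongr
    rw [div_le_iff₀ (by have := SzemerediRegularity.bound_pos ε ⌈4 / d⌉₊; positivity)]
    have h8 : (Fintype.card α : ℝ) ≤ 2 * SzemerediRegularity.bound ε ⌈4 / d⌉₊ * (P.part x).card := by
      exact_mod_cast h7
    linarith
  · have a1 := hP.sum_nonUniforms_lt univ_nonempty hε hu
    have a2 := hP.card_biUnion_offDiag_le hd h4
    have a3 := hP.card_interedges_sparsePairs_le (G := G) hd.le
    rw [card_univ] at a1 a2 a3
    have a4 := (card_union_le (((P.nonUniforms G ε).biUnion fun (U, V) ↦ U ×ˢ V) ∪ P.parts.biUnion offDiag)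
      ((P.sparsePairs G d).biUnion fun (U, V) ↦ G.interedges U V))
    have a5 := (card_union_le ((P.nonUniforms G ε).biUnion fun (U, V) ↦ U ×ˢ V) (P.parts.biUnion offDiag))
    have a6 := a4.trans (Nat.add_le_add_right a5 _)
    have a7 : ((((P.nonUniforms G ε).biUnion fun (U, V) ↦ U ×ˢ V) ∪ P.parts.biUnion offDiag ∪
      ((P.sparsePairs G d).biUnion fun (U, V) ↦ G.interedges U V)).card : ℝ) ≤
      ((P.nonUniforms G ε).biUnion fun (U, V) ↦ U ×ˢ V).card + (P.parts.biUnion offDiag).card +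
      ((P.sparsePairs G d).biUnion fun (U, V) ↦ G.interedges U V).card := by exact_mod_cast a6
    have : (0:ℝ) ≤ d * (Fintype.card α : ℝ) ^ 2 := by positivity
    nlinarith
  · intro x y hxy hbad
    simp only [mem_union, not_or] at hbad
    obtain ⟨⟨b1, b2⟩, b3⟩ := hbad
    have hne : P.part x ≠ P.part y := by
      intro h
      apply b2
      rw [mem_biUnion]
      refine ⟨P.part x, hxp x, ?_⟩
      rw [mem_offDiag]
      exact ⟨hx x, by rw [h]; exact hx y, hxy.ne⟩
    constructor
    · by_contra h
      apply b1
      rw [mem_biUnion]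
      exact ⟨(P.part x, P.part y), by rw [P.mk_mem_nonUniforms]; exact ⟨hxp x, hxp y, hne, h⟩,
        mem_product.2 ⟨hx x, hx y⟩⟩
    · by_contra h
      apply b3
      rw [mem_biUnion]
      refine ⟨(P.part x, P.part y), by rw [P.mk_mem_sparsePairs]; exact ⟨hxp x, hxp y, hne, not_le.1 h⟩, ?_⟩
      exact G.mk_mem_interedges_iff.2 ⟨hx x, hx y, hxy⟩
  · set BV := (univ.filter fun x => (((P.part x).filter fun y => κ y = κ x).card : ℝ) < θ * (P.part x).card) with hBV
    have hsub : BV ⊆ P.parts.biUnion fun U => (univ : Finset (Fin k)).biUnion fun c =>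
        if ((U.filter fun y => κ y = c).card : ℝ) < θ * U.card then U.filter fun y => κ y = c else ∅ := by
      intro x hxB
      have hxB := (mem_filter.1 hxB).2
      rw [mem_biUnion]
      refine ⟨P.part x, hxp x, ?_⟩
      rw [mem_biUnion]
      refine ⟨κ x, mem_univ _, ?_⟩
      rw [if_pos hxB]
      exact mem_filter.2 ⟨hx x, rfl⟩
    have h1 : (BV.card : ℝ) ≤ ∑ U ∈ P.parts, k * θ * U.card := by
      have h2 := (card_le_card hsub).trans card_biUnion_le
      have h3 : (BV.card : ℝ) ≤ ∑ U ∈ P.parts, (((univ : Finset (Fin k)).biUnion fun c =>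
        if ((U.filter fun y => κ y = c).card : ℝ) < θ * U.card then U.filter fun y => κ y = c else ∅).card : ℝ) := by
        exact_mod_cast h2
      refine h3.trans (sum_le_sum fun U _ => ?_)
      have h4 : (((univ : Finset (Fin k)).biUnion fun c =>
        if ((U.filter fun y => κ y = c).card : ℝ) < θ * U.card then U.filter fun y => κ y = c else ∅).card : ℝ)
        ≤ ∑ c : Fin k, ((if ((U.filter fun y => κ y = c).card : ℝ) < θ * U.card then U.filter fun y => κ y = c else ∅ : Finset α).card : ℝ) := by
        exact_mod_cast card_biUnion_le
      refine h4.trans ?_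
      calc _ ≤ ∑ c : Fin k, θ * U.card := by
            apply sum_le_sum
            intro c _
            split_ifs with h
            · exact h.le
            · simp only [card_empty, Nat.cast_zero]; positivity
        _ = _ := by simp; ring
    refine h1.trans ?_
    rw [← mul_sum]
    have : ∑ U ∈ P.parts, (U.card : ℝ) = Fintype.card α := by
      have := P.sum_card_parts
      rw [card_univ] at this
      exact_mod_cast this
    rw [this]

end regclean
section supersat

lemma telescope {G : Type} [Group G] (n : ℕ) : ∀ (v : Fin (n+1) → G) (y : Fin n → G),
    (∀ j, y j = (v j.castSucc)⁻¹ * v j.succ) →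
    ((List.finRange n).map y).prod = (v 0)⁻¹ * v (Fin.last n) := by
  induction n with
  | zero => intro v y _; simp
  | succ n ih =>
    intro v y h
    rw [List.finRange_succ, List.map_cons, List.prod_cons, List.map_map]
    have := ih (fun i => v i.succ) (fun i => y i.succ) (fun j => by rw [h]; rfl)
    have h0 := h 0
    simp only [Fin.castSucc_zero] at h0
    rw [show y ∘ Fin.succ = (fun i => y i.succ) from rfl, this, h0]
    simp [Fin.succ_last]

lemma pow_inj {G : Type} [Group G] [Fintype G] {r : ℕ} (h : r.Coprime (Fintype.card G)) :
    Function.Injective fun g : G => g ^ r := by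
  intro a b hab
  have h' : (Nat.card G).Coprime r := by rw [Nat.card_eq_fintype_card]; exact h.symm
  exact (powCoprime h').injective hab

lemma cyc_le {G : Type} [Group G] [Fintype G] (k : ℕ) (r : Fin k → ℕ)
    (hcop : ∀ j, (r j).Coprime (Fintype.card G)) (A : Finset G) (E : ℕ → G → G → Prop)
    (hE : ∀ (j : Fin k) u v, E j u v → ∃ a ∈ A, u * a ^ r j = v) :
    (cyc k E).card ≤ Fintype.card G * (univ.filter fun x : Fin k → G =>
      ((List.finRange k).map (fun j => x j ^ r j)).prod = 1 ∧ ∀ i, x i ∈ A).card := by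
  have hsurj : ∀ (j : Fin k) (g : G), ∃ a : G, a ^ r j = g := fun j g =>
    (Finite.surjective_of_injective (pow_inj (hcop j))) g
  choose ρ hρ using hsurj
  rw [← card_univ, ← card_product]
  apply card_le_card_of_injOn (fun v => (v 0, fun j => ρ j ((v j.castSucc)⁻¹ * v j.succ)))
  · intro v hv
    have hv := (mem_filter.1 (mem_coe.1 hv)).2
    rw [mem_coe, mem_product]
    refine ⟨mem_univ _, mem_filter.2 ⟨mem_univ _, ?_, ?_⟩⟩
    · simp only [hρ]
      rw [telescope k v _ (fun j => rfl), hv.1]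
      simp
    · intro j
      obtain ⟨a, ha, h⟩ := hE j _ _ (hv.2 j)
      have : ρ j ((v j.castSucc)⁻¹ * v j.succ) = a := by
        apply pow_inj (hcop j)
        simp only [hρ]
        rw [← h]; group
      simpa [this] using ha
  · intro v _ w _ h
    simp only [Prod.mk.injEq] at h
    obtain ⟨h0, h1⟩ := h
    funext i
    induction i using Fin.induction with
    | zero => exact h0
    | succ j ih =>
      have := congrArg (· ^ r j) (congrFun h1 j)
      simp only [hρ] at this
      rw [ih] at this
      exact mul_left_cancel this

lemma lowreg_of_uniform {G : Type} [Fintype G] {k : ℕ} (Γ : SimpleGraph (Fin k × G)) (c c' : Fin k)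
    (P P' : Finset (Fin k × G)) (d : ℝ) (hd : 0 < d) (hd1 : d ≤ 1) (hu : Γ.IsUniform (d * d / 2) P P')
    (hdens : d ≤ Γ.edgeDensity P P') (E : G → G → Prop) (hE : ∀ u v, Γ.Adj (c, u) (c', v) → E u v)
    (h1 : d * P.card ≤ ((univ : Finset G).filter fun g => (c, g) ∈ P).card)
    (h2 : d * P'.card ≤ ((univ : Finset G).filter fun g => (c', g) ∈ P').card) :
    LowReg (d/2) (d/2) E ((univ : Finset G).filter fun g => (c, g) ∈ P)
      ((univ : Finset G).filter fun g => (c', g) ∈ P') := by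
  intro X hX Y hY hX2 hY2
  have inj : ∀ e : Fin k, Function.Injective (fun g : G => (e, g)) := fun e a b h => (Prod.mk.inj h).2
  set X' := X.image (fun g => (c, g)) with hX'
  set Y' := Y.image (fun g => (c', g)) with hY'
  have cX : X'.card = X.card := card_image_of_injective _ (inj c)
  have cY : Y'.card = Y.card := card_image_of_injective _ (inj c')
  have sX : X' ⊆ P := by
    intro p hp
    obtain ⟨g, hg, rfl⟩ := mem_image.1 hp
    exact (mem_filter.1 (hX hg)).2
  have sY : Y' ⊆ P' := by
    intro p hp
    obtain ⟨g, hg, rfl⟩ := mem_image.1 hp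
    exact (mem_filter.1 (hY hg)).2
  have key := hu sX sY (by rw [cX]; nlinarith) (by rw [cY]; nlinarith)
  have key2 := (abs_lt.1 key).1
  have key3 : d / 2 ≤ (Γ.edgeDensity X' Y' : ℝ) := by nlinarith
  have key4 : (Γ.edgeDensity X' Y' : ℝ) * (X.card * Y.card) = ((Γ.interedges X' Y').card : ℝ) := by
    rcases Nat.eq_zero_or_pos (X.card * Y.card) with h0 | h0
    · have h00 : (X.card : ℝ) * Y.card = 0 := by exact_mod_cast h0
      have : (Γ.interedges X' Y').card = 0 := by
        have := Γ.card_interedges_le_mul X' Y'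
        rw [cX, cY, h0] at this
        omega
      rw [h00, this]; simp
    · have h00 : (X.card : ℝ) * Y.card ≠ 0 := by exact_mod_cast h0.ne'
      rw [SimpleGraph.edgeDensity_def, cX, cY]
      push_cast
      rw [div_mul_cancel₀ _ h00]
  have key5 : (Γ.interedges X' Y').card ≤ ((X ×ˢ Y).filter fun p => E p.1 p.2).card := by
    apply card_le_card_of_injOn (fun p => (p.1.2, p.2.2))
    · rintro ⟨p, q⟩ hp
      obtain ⟨hp, hq, hadj⟩ := Γ.mk_mem_interedges_iff.1 (mem_coe.1 hp)
      obtain ⟨g, hg, rfl⟩ := mem_image.1 hp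
      obtain ⟨g', hg', rfl⟩ := mem_image.1 hq
      exact mem_coe.2 (mem_filter.2 ⟨mem_product.2 ⟨hg, hg'⟩, hE _ _ hadj⟩)
    · rintro ⟨p, q⟩ hp ⟨p', q'⟩ hp' h
      obtain ⟨hp, hq, hadj⟩ := Γ.mk_mem_interedges_iff.1 (mem_coe.1 hp)
      obtain ⟨g, hg, rfl⟩ := mem_image.1 hp
      obtain ⟨g', hg', rfl⟩ := mem_image.1 hq
      obtain ⟨hp, hq, hadj⟩ := Γ.mk_mem_interedges_iff.1 (mem_coe.1 hp')
      obtain ⟨f, hf, rfl⟩ := mem_image.1 hp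
      obtain ⟨f', hf', rfl⟩ := mem_image.1 hq
      simp only [Prod.mk.injEq] at h
      rw [h.1, h.2]
  have key6 : ((Γ.interedges X' Y').card : ℝ) ≤ ((X ×ˢ Y).filter fun p => E p.1 p.2).card := by
    exact_mod_cast key5
  have : (0:ℝ) ≤ (X.card : ℝ) * Y.card := by positivity
  nlinarith

end supersat
section supersat2

lemma supersat (l : ℕ) (r : Fin (l+3) → ℕ) (ε : ℝ) (hε : 0 < ε) : ∃ (c : ℝ) (n0 : ℕ), 0 < c ∧
    ∀ (G : Type) [Fintype G] [Group G], n0 ≤ Fintype.card G → Monoid.exponent G ∣ ∑ j, r j →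
    (∀ j, (r j).Coprime (Fintype.card G)) → ∀ A : Finset G, ε * Fintype.card G ≤ A.card →
    c * (Fintype.card G : ℝ) ^ (l+2) ≤ (univ.filter fun x : Fin (l+3) → G =>
      ((List.finRange (l+3)).map (fun j => x j ^ r j)).prod = 1 ∧ ∀ i, x i ∈ A).card := by
  set k : ℝ := (l:ℝ) + 3 with hk
  have hk3 : 3 ≤ k := by rw [hk]; have : (0:ℝ) ≤ l := by positivity
                         linarith
  have hk0 : 0 < k := by linarith
  set d : ℝ := min ε 1 / (20 * k ^ 3) with hd
  have hmin : 0 < min ε 1 := lt_min hε one_pos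
  have hd0 : 0 < d := by positivity
  have hdk : d * (20 * k ^ 3) = min ε 1 := div_mul_cancel₀ _ (by positivity)
  have hk31 : 1 ≤ k ^ 3 := one_le_pow₀ (by linarith)
  have hd20 : d * 20 ≤ 1 := by
    have : d * 20 ≤ d * (20 * k ^ 3) := by nlinarith
    exact this.trans (hdk.le.trans (min_le_right _ _))
  obtain ⟨M, n1, hM, hreg⟩ := reg_clean (l+3) (d * d / 2) d d (by positivity) hd0 hd0
  have hMr : (0:ℝ) < M := by exact_mod_cast hM
  refine ⟨(d/2 * (d/2) * (d * (k / (2 * M)))) ^ (l+3), n1, by positivity, ?_⟩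
  intro G _ _ hn hexp hcop A hA
  set n : ℝ := (Fintype.card G : ℝ) with hnn
  have hn0 : 0 < n := by rw [hnn]; exact_mod_cast Fintype.card_pos
  set ι : ℕ → Fin (l+3) := fun j => Fin.ofNat (l+3) j with hι
  have hι1 : ∀ j, ι (j+1) = ι j + 1 := by
    intro j
    simp only [hι, Fin.ext_iff, Fin.val_ofNat, Fin.val_add]
    simp
  have hιv : ∀ j : Fin (l+3), ι (j:ℕ) = j := by
    intro j
    simp only [hι, Fin.ext_iff, Fin.val_ofNat]
    exact Nat.mod_eq_of_lt j.2
  have hιl : ι (l+3) = ι 0 := by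
    simp only [hι, Fin.ext_iff, Fin.val_ofNat]
    simp
  have hne1 : ∀ c : Fin (l+3), c ≠ c + 1 := by
    intro c h
    have := congrArg (fun z => z - c) h
    simp at this
  have hne2 : ∀ c : Fin (l+3), c ≠ c + 1 + 1 := by
    intro c h
    have h2 : (1 + 1 : Fin (l+3)) = 0 := by
      have h3 : c + (1 + 1) = c + 0 := by rw [add_zero, ← add_assoc]; exact h.symm
      exact add_left_cancel h3
    rw [Fin.ext_iff, Fin.val_add] at h2
    simp at h2
    rw [Nat.mod_eq_of_lt (by omega)] at h2
    omega
  set Γ : SimpleGraph (Fin (l+3) × G) := SimpleGraph.fromRel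
    (fun x y => y.1 = x.1 + 1 ∧ ∃ a ∈ A, x.2 * a ^ r x.1 = y.2) with hΓ
  set E : ℕ → G → G → Prop := fun j u v => ∃ a ∈ A, u * a ^ r (ι j) = v with hE
  have hΓE : ∀ j u v, Γ.Adj (ι j, u) (ι (j+1), v) → E j u v := by
    intro j u v h
    rw [hΓ, SimpleGraph.fromRel_adj] at h
    obtain ⟨-, h | h⟩ := h
    · exact h.2
    · exfalso
      have := h.1
      simp only [hι1] at this
      exact hne2 _ this
  have hEΓ : ∀ j u v, E j u v → Γ.Adj (ι j, u) (ι (j+1), v) := by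
    intro j u v h
    rw [hΓ, SimpleGraph.fromRel_adj]
    refine ⟨?_, Or.inl ⟨hι1 j, h⟩⟩
    intro h
    have := (Prod.mk.inj h).1
    rw [hι1] at this
    exact hne1 _ this
  have hcard : Fintype.card (Fin (l+3) × G) = (l+3) * Fintype.card G := by simp
  have hcardr : (Fintype.card (Fin (l+3) × G) : ℝ) = k * n := by
    rw [hcard, hk, hnn]; push_cast; ring
  obtain ⟨part, Bad, hp1, hp2, hp3, hp4, hp5⟩ := hreg (Fin (l+3) × G) Γ Prod.fst (by
    rw [hcard]; nlinarith)
  rw [hcardr] at hp2 hp3 hp5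
  set BV := (univ.filter fun x : Fin (l+3) × G =>
    (((part x).filter fun y => y.1 = x.1).card : ℝ) < d * (part x).card) with hBV
  set R : ℕ → ℕ := fun j => ∑ i ∈ range j, r (ι i) with hR
  have hR1 : ∀ j, R (j+1) = R j + r (ι j) := fun j => sum_range_succ _ _
  have hRl : R (l+3) = ∑ j, r j := by
    simp only [hR]
    rw [sum_range]
    exact sum_congr rfl fun i _ => by rw [hιv]
  set X : ℕ → G × G → Fin (l+3) × G := fun j p => (ι j, p.1 * p.2 ^ R j) with hX
  -- bad sets
  set B1 : ℕ → Finset (G × G) := fun j => univ.filter fun p => (X j p, X (j+1) p) ∈ Bad with hB1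
  set B2 : ℕ → Finset (G × G) := fun j => univ.filter fun p => X j p ∈ BV with hB2
  have cB1 : ∀ j, (B1 j).card ≤ Bad.card := by
    intro j
    apply card_le_card_of_injOn (fun p => (X j p, X (j+1) p))
    · intro p hp
      exact (mem_filter.1 (mem_coe.1 hp)).2
    · rintro ⟨u, a⟩ _ ⟨u', a'⟩ _ h
      simp only [hX, Prod.mk.injEq, true_and] at h
      obtain ⟨h1, h2⟩ := h
      rw [hR1, pow_add, pow_add, ← mul_assoc, ← mul_assoc, h1] at h2
      have h3 : a = a' := pow_inj (hcop (ι j)) (mul_left_cancel h2)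
      subst h3
      rw [mul_right_cancel h1]
  have cB2 : ∀ j, (B2 j).card ≤ BV.card * Fintype.card G := by
    intro j
    rw [← card_univ, ← card_product]
    apply card_le_card_of_injOn (fun p => (X j p, p.2))
    · intro p hp
      exact mem_coe.2 (mem_product.2 ⟨(mem_filter.1 (mem_coe.1 hp)).2, mem_univ _⟩)
    · rintro ⟨u, a⟩ _ ⟨u', a'⟩ _ h
      simp only [hX, Prod.mk.injEq, true_and] at h
      obtain ⟨h1, h2⟩ := h
      subst h2
      rw [mul_right_cancel h1]
  have hgood : ∃ p : G × G, p.2 ∈ A ∧ (∀ j < l+3, p ∉ B1 j) ∧ ∀ j < l+3, p ∉ B2 j := by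
    by_contra hcon
    have hsub : (univ : Finset G) ×ˢ A ⊆ (range (l+3)).biUnion fun j => B1 j ∪ B2 j := by
      rintro p hp
      by_contra hp2
      apply hcon
      simp only [mem_biUnion, mem_union, mem_range, not_exists, not_and, not_or] at hp2
      exact ⟨p, (mem_product.1 hp).2, fun j hj => (hp2 j hj).1, fun j hj => (hp2 j hj).2⟩
    have h1 := (card_le_card hsub).trans card_biUnion_le
    have h2 : ∑ j ∈ range (l+3), (B1 j ∪ B2 j).card ≤ (l+3) * (Bad.card + BV.card * Fintype.card G) := by
      have := sum_le_card_nsmul (range (l+3)) (fun j => (B1 j ∪ B2 j).card) (Bad.card + BV.card * Fintype.card G)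
        (fun j _ => (card_union_le _ _).trans (Nat.add_le_add (cB1 j) (cB2 j)))
      simpa using this
    rw [card_product, card_univ] at h1
    have h3 : n * A.card ≤ k * (Bad.card + BV.card * n) := by
      have := h1.trans h2
      have h4 : ((Fintype.card G * A.card : ℕ) : ℝ) ≤ (((l+3) * (Bad.card + BV.card * Fintype.card G) : ℕ) : ℝ) := by
        exact_mod_cast this
      push_cast at h4
      rw [hk, hnn]
      exact h4
    have h4 : n * (ε * n) ≤ n * A.card := by gcongr
    have h5 : k * (Bad.card + BV.card * n) ≤ k * ((4 * (d * d / 2) + 5 * d) * (k * n) ^ 2 + k * d * (k * n) * n) := by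
      gcongr
      have : (((l + 3 : ℕ)) : ℝ) = k := by rw [hk]; push_cast; ring
      rw [this] at hp5
      exact hp5
    have h6 : k * ((4 * (d * d / 2) + 5 * d) * (k * n) ^ 2 + k * d * (k * n) * n)
        ≤ (d * (20 * k^3)) * n ^ 2 / 2 := by
      have e1 : k * ((4 * (d * d / 2) + 5 * d) * (k * n) ^ 2 + k * d * (k * n) * n)
        = (2 * d + 6) * (d * k^3 * n^2) := by ring
      rw [e1]
      have : 0 ≤ d * k^3 * n^2 := by positivity
      nlinarith
    rw [hdk] at h6
    have h7 : min ε 1 * n ^ 2 ≤ ε * n ^ 2 := by gcongr; exact min_le_left _ _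
    have h8 : 0 < min ε 1 * n ^ 2 := by positivity
    nlinarith
  obtain ⟨⟨u, a⟩, haA, hg1, hg2⟩ := hgood
  simp only at haA
  have hXl : X (l+3) (u, a) = X 0 (u, a) := by
    simp only [hX, hιl]
    rw [hRl, Monoid.exponent_dvd_iff_forall_pow_eq_one.1 hexp]
    simp [hR]
  set Q : ℕ → Finset G := fun j => univ.filter fun g => (ι j, g) ∈ part (X j (u, a)) with hQ
  have hslice : ∀ j, (Q j).card = ((part (X j (u,a))).filter fun y => y.1 = (X j (u,a)).1).card := by
    intro j
    apply card_bij (fun g _ => (ι j, g))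
    · intro g hg
      exact mem_filter.2 ⟨(mem_filter.1 hg).2, rfl⟩
    · intro g _ g' _ h
      exact (Prod.mk.inj h).2
    · rintro ⟨c, g⟩ hg
      obtain ⟨h1, h2⟩ := mem_filter.1 hg
      have h2 : c = ι j := h2
      subst h2
      exact ⟨g, mem_filter.2 ⟨mem_univ _, h1⟩, rfl⟩
  have hQl : Q (l+3) = Q 0 := by
    simp only [hQ]
    rw [hXl, hιl]
  have hQd : ∀ j, j ≤ l+3 → d * (part (X j (u,a))).card ≤ (Q j).card := by
    have h0 : ∀ j, j < l+3 → d * (part (X j (u,a))).card ≤ (Q j).card := by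
      intro j hj
      by_contra hcon
      apply hg2 j hj
      refine mem_filter.2 ⟨mem_univ _, mem_filter.2 ⟨mem_univ _, ?_⟩⟩
      rw [← hslice]
      exact not_le.1 hcon
    intro j hj
    rcases hj.lt_or_eq with h | h
    · exact h0 j h
    · rw [h, hXl, hQl]; exact h0 0 (by omega)
  -- periodise
  set Q' : ℕ → Finset G := fun j => if j ≤ l + 3 then Q j else Q 0 with hQ'
  have hQ'e : ∀ j, j ≤ l + 3 → Q' j = Q j := fun j hj => if_pos hj
  have hcyc := cyc_count (γ := d/2) (η := d/2) (by linarith) (by linarith) (by linarith) le_rfl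
    (d * (k * n / (2 * M))) (by positivity) l E Q' (by
      intro j
      have h0 : ∀ j, j ≤ l+3 → d * (k * n / (2 * M)) ≤ (Q j).card := by
        intro j hj
        refine le_trans ?_ (hQd j hj)
        gcongr
        exact hp2 _
      simp only [hQ']
      split_ifs with h
      · exact h0 j h
      · exact h0 0 (by omega)) (by
      intro j hj
      rw [hQ'e j (by omega), hQ'e (j+1) (by omega)]
      have hadj : Γ.Adj (X j (u,a)) (X (j+1) (u,a)) := by
        apply hEΓ
        exact ⟨a, haA, by simp only [hR1, pow_add, mul_assoc]⟩
      have hnb : (X j (u,a), X (j+1) (u,a)) ∉ Bad := fun h =>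
        hg1 j hj (mem_filter.2 ⟨mem_univ _, h⟩)
      obtain ⟨hu, hden⟩ := hp4 _ _ hadj hnb
      exact lowreg_of_uniform Γ (ι j) (ι (j+1)) _ _ d hd0 (by linarith) hu hden (E j) (hΓE j)
        (hQd j (by omega)) (hQd (j+1) (by omega))) (by
      rw [hQ'e _ le_rfl, hQ'e 0 (by omega), hQl])
  have hle := cyc_le (l+3) r hcop A E (fun j u v h => by
    obtain ⟨a, ha, h⟩ := h
    rw [hιv] at h
    exact ⟨a, ha, h⟩)
  set N := (univ.filter fun x : Fin (l+3) → G =>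
      ((List.finRange (l+3)).map (fun j => x j ^ r j)).prod = 1 ∧ ∀ i, x i ∈ A).card with hN
  have hle2 : ((cyc (l+3) E).card : ℝ) ≤ n * N := by rw [hnn]; exact_mod_cast hle
  have h9 := hcyc.trans hle2
  have e2 : (d/2 * (d/2) * (d * (k * n / (2 * M)))) ^ (l+3) =
      n * ((d/2 * (d/2) * (d * (k / (2 * M)))) ^ (l+3) * n ^ (l+2)) := by
    rw [show d/2 * (d/2) * (d * (k * n / (2 * M))) = (d/2 * (d/2) * (d * (k / (2 * M)))) * n by ring,
      mul_pow]
    ring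
  rw [e2] at h9
  exact le_of_mul_le_mul_left h9 hn0

end supersat2
section degs

noncomputable def Sol {G : Type} [Fintype G] [Group G] {k : ℕ} (r : Fin k → ℕ) : Finset (Fin k → G) :=
  univ.filter fun x => ((List.finRange k).map (fun j => x j ^ r j)).prod = 1

lemma list_prod_inj {G ι : Type} [Group G] (f g : ι → G) (i : ι) (h : ∀ j, j ≠ i → f j = g j) :
    ∀ L : List ι, L.Nodup → i ∈ L → (L.map f).prod = (L.map g).prod → f i = g i := by
  intro L
  induction L with
  | nil => intro _ h; simp at h
  | cons a t ih =>
    intro hn hi hp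
    rw [List.nodup_cons] at hn
    rw [List.map_cons, List.map_cons, List.prod_cons, List.prod_cons] at hp
    by_cases hai : a = i
    · subst hai
      have : t.map f = t.map g := List.map_congr_left fun j hj => h j (fun e => hn.1 (e ▸ hj))
      rw [this] at hp
      exact mul_right_cancel hp
    · rw [h a hai] at hp
      refine ih hn.2 ?_ (mul_left_cancel hp)
      rcases List.mem_cons.1 hi with e | e
      · exact absurd e.symm hai
      · exact e

lemma sol_inj {G : Type} [Fintype G] [Group G] {k : ℕ} {r : Fin k → ℕ}
    (hcop : ∀ j, (r j).Coprime (Fintype.card G)) {x y : Fin k → G} (hx : x ∈ Sol r) (hy : y ∈ Sol r)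
    (i : Fin k) (h : ∀ j, j ≠ i → x j = y j) : x = y := by
  have hx := (mem_filter.1 hx).2
  have hy := (mem_filter.1 hy).2
  have := list_prod_inj (fun j => x j ^ r j) (fun j => y j ^ r j) i (fun j hj => by simp only [h j hj])
    (List.finRange k) (List.nodup_finRange k) (List.mem_finRange i) (hx.trans hy.symm)
  have hi := pow_inj (hcop i) this
  funext j
  by_cases hj : j = i
  · rw [hj, hi]
  · exact h j hj

lemma sol_count {G : Type} [Fintype G] [Group G] {k : ℕ} {r : Fin k → ℕ}
    (hcop : ∀ j, (r j).Coprime (Fintype.card G)) (F : Finset (Fin k → G)) (hF : F ⊆ Sol r)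
    (T : Finset (Fin k)) (i : Fin k) (hi : i ∉ T)
    (h : ∀ x ∈ F, ∀ y ∈ F, (∀ j ∉ insert i T, x j = y j) → ∀ j ∈ T, x j = y j) :
    F.card ≤ Fintype.card G ^ (k - (T.card + 1)) := by
  have e : Fintype.card ({j // j ∉ insert i T} → G) = Fintype.card G ^ (k - (T.card + 1)) := by
    rw [Fintype.card_fun, Fintype.card_subtype_compl, Fintype.card_fin, Fintype.card_coe,
      card_insert_of_notMem hi]
  rw [← e, ← card_univ]
  apply card_le_card_of_injOn (fun x j => x j.1)
  · intro x _
    exact mem_coe.2 (mem_univ _)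
  · intro x hx y hy hxy
    have h1 : ∀ j ∉ insert i T, x j = y j := fun j hj => congrFun hxy ⟨j, hj⟩
    have h2 := h x hx y hy h1
    apply sol_inj hcop (hF hx) (hF hy) i
    intro j hj
    by_cases hjT : j ∈ T
    · exact h2 j hjT
    · exact h1 j (by rw [mem_insert]; tauto)

lemma hdeg_sol {G : Type} [Fintype G] [Group G] {k : ℕ} {r : Fin k → ℕ}
    (hcop : ∀ j, (r j).Coprime (Fintype.card G)) (T : Finset (Fin k)) (hT : T.card < k) (z : Fin k → G) :
    hdeg (Sol r) T z ≤ Fintype.card G ^ (k - (T.card + 1)) := by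
  have : ∃ i, i ∉ T := by
    by_contra hcon
    push Not at hcon
    rw [(eq_univ_iff_forall.2 hcon), card_univ, Fintype.card_fin] at hT
    omega
  obtain ⟨i, hi⟩ := this
  apply sol_count hcop _ (filter_subset _ _) T i hi
  intro x hx y hy _ j hj
  rw [(mem_filter.1 hx).2 j hj, (mem_filter.1 hy).2 j hj]

lemma hdeg_univ {G : Type} {k : ℕ} (H : Finset (Fin k → G)) (z : Fin k → G) :
    hdeg H univ z ≤ 1 := by
  unfold hdeg
  rw [card_le_one]
  intro x hx y hy
  funext j
  rw [(mem_filter.1 hx).2 j (mem_univ _), (mem_filter.1 hy).2 j (mem_univ _)]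

lemma noninj_count {G : Type} [Fintype G] [Group G] {l : ℕ} {r : Fin (l+3) → ℕ}
    (hcop : ∀ j, (r j).Coprime (Fintype.card G)) :
    ((Sol r).filter fun x : Fin (l+3) → G => ¬ Function.Injective x).card ≤
      (l+3) * (l+3) * Fintype.card G ^ (l+1) := by
  have hsub : ((Sol r).filter fun x : Fin (l+3) → G => ¬ Function.Injective x) ⊆
      (univ : Finset (Fin (l+3) × Fin (l+3))).biUnion fun p =>
        (Sol r).filter fun x => p.1 ≠ p.2 ∧ x p.1 = x p.2 := by
    intro x hx
    obtain ⟨h1, h2⟩ := mem_filter.1 hx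
    rw [Function.not_injective_iff] at h2
    obtain ⟨a, b, hab, hne⟩ := h2
    exact mem_biUnion.2 ⟨(a, b), mem_univ _, mem_filter.2 ⟨h1, hne, hab⟩⟩
  have h1 := (card_le_card hsub).trans card_biUnion_le
  refine h1.trans ?_
  have h2 := sum_le_card_nsmul (univ : Finset (Fin (l+3) × Fin (l+3)))
    (fun p => ((Sol r).filter fun x : Fin (l+3) → G => p.1 ≠ p.2 ∧ x p.1 = x p.2).card)
    (Fintype.card G ^ (l+1)) (by
      rintro ⟨a, b⟩ _
      by_cases hab : a = b
      · simp [hab]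
      · obtain ⟨i, hi⟩ : ∃ i, i ∉ ({a, b} : Finset (Fin (l+3))) := by
          by_contra hcon
          push Not at hcon
          have h3 := card_le_two (a := a) (b := b)
          rw [(eq_univ_iff_forall.2 hcon), card_univ, Fintype.card_fin] at h3
          omega
        simp only [mem_insert, mem_singleton, not_or] at hi
        have := sol_count hcop ((Sol r).filter fun x : Fin (l+3) → G => a ≠ b ∧ x a = x b)
          (filter_subset _ _) {b} i (by simpa using hi.2) (by
            intro x hx y hy hxy j hj
            rw [mem_singleton] at hj
            subst hj
            rw [← (mem_filter.1 hx).2.2, ← (mem_filter.1 hy).2.2]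
            apply hxy
            simp only [mem_insert, mem_singleton, not_or]
            exact ⟨fun h => hi.1 h.symm, hab⟩)
        simpa using this)
  simpa using h2

end degs
section final

set_option maxHeartbeats 2000000 in
lemma main3 (l : ℕ) (r : Fin (l+3) → ℕ) (β : ℝ) (hβ : 0 < β) (hβ1 : β ≤ 1) :
    ∃ (n0 : ℕ) (D : ℝ), 0 < D ∧ ∀ (G : Type) [Fintype G] [Group G], n0 ≤ Fintype.card G →
    Monoid.exponent G ∣ ∑ j, r j → (∀ j, (r j).Coprime (Fintype.card G)) → ∀ t : ℕ,
    D * (Fintype.card G : ℝ) ^ ((1:ℝ) / ((l:ℝ) + 2)) ≤ t → (t:ℝ) ≤ β / 4 * Fintype.card G →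
    (univ.filter fun X : Finset G => X.card = t ∧ ∀ x ∈ distinctPart (Sol r), ¬ (∀ j, x j ∈ X)).card
      ≤ Nat.choose ⌊β * (Fintype.card G : ℝ)⌋₊ t := by
  set ε : ℝ := β ^ 2 / 64 with hε
  have hε0 : 0 < ε := by positivity
  obtain ⟨c, n1, hc, hsup⟩ := supersat l r ε hε0
  obtain ⟨c', hc', hround⟩ := rounds (l+2) (c/2) 1 (2 ^ (l+2)) (by positivity) one_pos (by positivity)
  set m : ℕ := ⌈1 / c'⌉₊ with hm
  set n2 : ℕ := ⌈2 * ((l:ℝ)+3)^2 / c⌉₊ with hn2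
  set n3 : ℕ := ⌈8 / β⌉₊ with hn3
  refine ⟨n1 + n2 + n3, 4 * m * (l+2) + 1, by positivity, ?_⟩
  intro G _ _ hn hexp hcop t ht1 ht2
  set n : ℝ := (Fintype.card G : ℝ) with hnn
  have hcardpos : 0 < Fintype.card G := Fintype.card_pos
  have hn1 : 1 ≤ n := by rw [hnn]; exact_mod_cast hcardpos
  have hn0 : 0 < n := by linarith
  have hnc : 2 * ((l:ℝ)+3)^2 ≤ n * c := by
    rw [← div_le_iff₀ hc]
    refine (Nat.le_ceil _).trans ?_
    rw [hnn]
    exact Nat.cast_le.2 (by omega : n2 ≤ Fintype.card G)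
  have hnβ : 8 ≤ n * β := by
    rw [← div_le_iff₀ hβ]
    refine (Nat.le_ceil _).trans ?_
    rw [hnn]
    exact Nat.cast_le.2 (by omega : n3 ≤ Fintype.card G)
  set ρ : ℝ := n ^ ((1:ℝ) / ((l:ℝ) + 2)) with hρ
  have hρ1 : 1 ≤ ρ := Real.one_le_rpow hn1 (by positivity)
  have hρn : ρ ^ (l+2) = n := by
    rw [hρ, ← Real.rpow_natCast, ← Real.rpow_mul hn0.le]
    push_cast
    rw [one_div, inv_mul_cancel₀ (by positivity), Real.rpow_one]
  set s : ℕ := ⌈ρ⌉₊ with hs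
  have hs1 : ρ ≤ s := Nat.le_ceil _
  have hs2 : (s:ℝ) ≤ 2 * ρ := by
    have := Nat.ceil_lt_add_one (show 0 ≤ ρ by linarith)
    linarith
  have hs0 : 0 < s := Nat.ceil_pos.2 (by linarith)
  have hs1' : (1:ℝ) ≤ s := by exact_mod_cast hs0
  have hq : ∀ e, e ≤ l + 1 → ((s:ℝ)/n) ^ e * n ^ (l+1) = s ^ e * n ^ (l + 1 - e) := by
    intro e he
    obtain ⟨f, hf⟩ := Nat.exists_eq_add_of_le he
    rw [hf, Nat.add_sub_cancel_left, div_pow, pow_add]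
    field_simp
  have hqtop : ((s:ℝ)/n) ^ (l+2) * n ^ (l+1) = s ^ (l+2) / n := by
    rw [div_pow, pow_succ n (l+1)]
    field_simp
  have hqtop1 : 1 ≤ ((s:ℝ)/n) ^ (l+2) * n ^ (l+1) := by
    rw [hqtop, le_div_iff₀ hn0, one_mul, ← hρn]
    gcongr
  have hHS : distinctPart (Sol r) ⊆ (Sol r : Finset (Fin (l+3) → G)) := filter_subset _ _
  obtain ⟨F, σ, hcons, hFσ⟩ := hround G (distinctPart (Sol r)) s (n ^ (l+1)) ((s:ℝ)/n) ε hs0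
    (by positivity) (by positivity) (div_mul_cancel₀ _ hn0.ne') hqtop1 (by
      rw [hqtop, div_le_iff₀ hn0, ← hρn, ← mul_pow]
      gcongr) (by
      intro A hA
      have h1 := hsup G (by omega) hexp hcop A hA
      have h2 := noninj_count hcop
      have h3 : (univ.filter fun x : Fin (l+3) → G =>
        ((List.finRange (l+3)).map (fun j => x j ^ r j)).prod = 1 ∧ ∀ i, x i ∈ A) ⊆
        ((distinctPart (Sol r)).filter fun x => ∀ i, x i ∈ A) ∪
        ((Sol r).filter fun x : Fin (l+3) → G => ¬ Function.Injective x) := by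
        intro x hx
        obtain ⟨-, hx1, hx2⟩ := mem_filter.1 hx
        have hxS : x ∈ Sol r := mem_filter.2 ⟨mem_univ _, hx1⟩
        rw [mem_union]
        by_cases hinj : Function.Injective x
        · left; exact mem_filter.2 ⟨mem_filter.2 ⟨hxS, hinj⟩, hx2⟩
        · right; exact mem_filter.2 ⟨hxS, hinj⟩
      have h4 := (card_le_card h3).trans ((card_union_le _ _).trans (Nat.add_le_add_left h2 _))
      have h5 : (((univ.filter fun x : Fin (l+3) → G =>
        ((List.finRange (l+3)).map (fun j => x j ^ r j)).prod = 1 ∧ ∀ i, x i ∈ A).card : ℕ) : ℝ) ≤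
        ((distinctPart (Sol r)).filter fun x => ∀ i, x i ∈ A).card + ((l:ℝ)+3) * ((l:ℝ)+3) * n ^ (l+1) := by
        rw [hnn]; exact_mod_cast h4
      have h6 : 2 * ((l:ℝ)+3)^2 * n ^ (l+1) ≤ n * c * n ^ (l+1) := by gcongr
      have h7 := h1.trans h5
      rw [pow_succ n (l+1)] at h7
      nlinarith) (by
      intro T hT z
      have h1 := hdeg_mono hHS T z
      have hTk : T.card ≤ l + 3 := by simpa using card_le_univ T
      have hT0 := hT.card_pos
      rw [one_mul]
      rcases hTk.lt_or_eq with h | h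
      · have h2 := h1.trans (hdeg_sol hcop T h z)
        have h3 : ((hdeg (distinctPart (Sol r)) T z : ℕ) : ℝ) ≤ n ^ (l + 3 - (T.card + 1)) := by
          rw [hnn]; exact_mod_cast h2
        refine h3.trans ?_
        rw [hq _ (by omega), show l + 3 - (T.card + 1) = l + 1 - (T.card - 1) by omega]
        have : (1:ℝ) ≤ (s:ℝ) ^ (T.card - 1) := one_le_pow₀ hs1'
        have h4 : 0 < n ^ (l + 1 - (T.card - 1)) := by positivity
        nlinarith
      · have hTu : T = univ := by
          rw [← card_eq_iff_eq_univ, h, Fintype.card_fin]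
        have h2 : ((hdeg (distinctPart (Sol r)) T z : ℕ) : ℝ) ≤ 1 := by
          rw [hTu]; exact_mod_cast hdeg_univ _ _
        rw [h, show l + 3 - 1 = l + 2 by omega]
        exact h2.trans hqtop1) m univ (by
      rw [card_univ, ← hnn]
      have h1 : 1 ≤ m * c' := by
        rw [← div_le_iff₀ hc']; exact Nat.le_ceil _
      have h2 : 0 < ε * n := by positivity
      nlinarith)
  have hS2 : 2 * (m * ((l+2) * s)) ≤ t := by
    have : (2:ℝ) * (m * ((l+2) * s)) ≤ t := by
      refine le_trans ?_ ht1
      have : (m:ℝ) * ((l+2) * s) ≤ m * ((l+2) * (2 * ρ)) := by gcongr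
      nlinarith
    exact_mod_cast this
  have ht0 : 0 < t := by
    have : (0:ℝ) < t := lt_of_lt_of_le (by positivity) ht1
    exact_mod_cast this
  have hcount := count_free (fun X : Finset G => ∀ x ∈ distinctPart (Sol r), ¬ (∀ j, x j ∈ X)) F σ hcons
    (m * ((l+2) * s)) t ⌊ε * n⌋₊ (by omega) (by
      intro I hI hP
      obtain ⟨h1, h2, h3⟩ := hFσ I (by rw [← card_pos]; omega) hP (subset_univ _)
      exact ⟨h1, h2, Nat.le_floor h3⟩)
  suffices hfin : (Fintype.card G).choose (m * ((l+2) * s)) * (⌊ε * n⌋₊).choose (t - (m * ((l+2) * s))) ≤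
      Nat.choose ⌊β * n⌋₊ t by
    have h := hcount.trans hfin
    clear_value m ρ s n ε
    clear hround hsup hFσ
    refine le_trans (le_of_eq ?_) h
    congr!
  have hW1 : β * n / 4 ≤ (⌊β * n / 2⌋₊ : ℝ) := by
    have := Nat.sub_one_lt_floor (β * n / 2)
    nlinarith
  have hW2 : (⌊β * n / 2⌋₊ : ℝ) ≤ β * n / 2 := Nat.floor_le (by positivity)
  have hm1 : (⌊ε * n⌋₊ : ℝ) ≤ ε * n := Nat.floor_le (by positivity)
  have hβn : β * n ≤ n := by nlinarith
  have hεβ : ε * n ≤ β * n / 4 := by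
    rw [hε]
    have : β * (β * n) ≤ 1 * (β * n) := by gcongr
    nlinarith
  apply choose_final _ _ _ _ _ ⌊β * n / 2⌋₊ hS2
  · apply Nat.le_floor
    push_cast
    have h1 : (2:ℝ) * (m * ((l+2) * s)) ≤ t := by exact_mod_cast hS2
    nlinarith
  · have : (⌊ε * n⌋₊ : ℝ) ≤ (⌊β * n / 2⌋₊ : ℝ) := by linarith
    exact_mod_cast this
  · have : (0:ℝ) < (⌊β * n / 2⌋₊ : ℝ) := by nlinarith
    exact_mod_cast this
  · have : (⌊β * n / 2⌋₊ : ℝ) ≤ n := by nlinarith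
    rw [hnn] at this
    exact_mod_cast this
  · have h1 : 4 * (n * (⌊ε * n⌋₊ : ℝ)) ≤ (⌊β * n / 2⌋₊ : ℝ) * (⌊β * n / 2⌋₊ : ℝ) := by
      calc 4 * (n * (⌊ε * n⌋₊ : ℝ)) ≤ 4 * (n * (ε * n)) := by gcongr
        _ = (β * n / 4) * (β * n / 4) := by rw [hε]; ring
        _ ≤ _ := by gcongr
    have h2 : 4 * ((Fintype.card G : ℝ) * (⌊ε * n⌋₊ : ℝ)) ≤ (⌊β * n / 2⌋₊ : ℝ) * (⌊β * n / 2⌋₊ : ℝ) := h1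
    exact_mod_cast h2

end final

/-- counting sets free of solutions (with pairwise distinct entries) of
`x_1^{r_1} ⋯ x_k^{r_k} = e` in finite (possibly non-abelian) groups. -/
theorem stmt14 (k : ℕ) (hk : 2 ≤ k) (r : Fin k → ℕ) (hr : ∀ j, 0 < r j)
    (G : ℕ → Type) [∀ i, Fintype (G i)] [∀ i, Group (G i)]
    (hG : Tendsto (fun i => (Fintype.card (G i) : ℝ)) atTop atTop)
    (hexp : ∀ i, Monoid.exponent (G i) ∣ ∑ j, r j)
    (hcop : ∀ i j, Nat.Coprime (r j) (Fintype.card (G i)))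
    (S : ∀ i, Finset (Fin k → G i))
    (hS : ∀ i (x : Fin k → G i), x ∈ S i ↔
      ((List.finRange k).map (fun j => x j ^ r j)).prod = 1)
    (β δ : ℝ) (hβ : 0 < β) (hδ0 : 0 < δ) (hδ : δ ≤ min (β/2) (1/40)) :
    ∃ (i₀ : ℕ) (C : ℝ), 0 < C ∧ ∀ i, i₀ ≤ i → ∀ t : ℕ,
      (C/δ) * (k:ℝ) ^ (-(1:ℝ)/((k:ℝ)-1)) *
          (Fintype.card (G i) : ℝ) ^ ((1:ℝ)/((k:ℝ)-1)) ≤ (t:ℝ) →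
      (t:ℝ) ≤ (δ/2) * (Fintype.card (G i) : ℝ) →
      ((Finset.univ.filter (fun X : Finset (G i) =>
          X.card = t ∧ ∀ x ∈ distinctPart (S i), ¬ (∀ j, x j ∈ X))).card : ℝ)
        ≤ (Nat.choose ⌊β * (Fintype.card (G i) : ℝ)⌋₊ t : ℝ) := by
  have hδ1 := hδ.trans (min_le_left _ _)
  have hδ2 := hδ.trans (min_le_right _ _)
  rcases hk.lt_or_eq with hk3 | hk2
  · obtain ⟨l, rfl⟩ : ∃ l, k = l + 3 := ⟨k - 3, by omega⟩
    have hm0 : 0 < min β 1 := lt_min hβ one_pos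
    obtain ⟨n0, D, hD, hmain⟩ := main3 l r (min β 1) hm0 (min_le_right _ _)
    obtain ⟨i₀, hi₀⟩ := eventually_atTop.1 (hG.eventually_ge_atTop (n0 : ℝ))
    set K : ℝ := ((l + 3 : ℕ) : ℝ) ^ (-(1:ℝ)/(((l + 3 : ℕ) : ℝ)-1)) with hK
    have hK0 : 0 < K := by rw [hK]; positivity
    refine ⟨i₀, D * δ / K, by positivity, ?_⟩
    intro i hi t ht1 ht2
    have hn : n0 ≤ Fintype.card (G i) := by exact_mod_cast hi₀ i hi
    have hSi : S i = Sol r := by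
      ext x
      rw [hS, Sol, mem_filter]
      simp
    have e1 : D * δ / K / δ * K = D := by field_simp
    rw [e1, show (((l + 3 : ℕ) : ℝ) - 1) = (l:ℝ) + 2 by push_cast; ring] at ht1
    have hδm : δ / 2 ≤ min β 1 / 4 := by
      rcases min_choice β 1 with h | h <;> rw [h] <;> linarith
    have h1 := hmain (G i) hn (hexp i) (hcop i) t ht1 (ht2.trans (by gcongr))
    rw [hSi]
    have h2 : Nat.choose ⌊min β 1 * (Fintype.card (G i) : ℝ)⌋₊ t ≤
        Nat.choose ⌊β * (Fintype.card (G i) : ℝ)⌋₊ t := by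
      apply Nat.choose_le_choose
      apply Nat.floor_le_floor
      gcongr
      exact min_le_left _ _
    exact_mod_cast h1.trans h2
  · subst hk2
    refine ⟨0, 1, one_pos, ?_⟩
    intro i _ t ht1 ht2
    exfalso
    have hn : (0:ℝ) < Fintype.card (G i) := by exact_mod_cast Fintype.card_pos
    have e : ((2:ℕ):ℝ) ^ (-(1:ℝ)/(((2:ℕ):ℝ)-1)) = 1/2 := by
      rw [show (-(1:ℝ)/(((2:ℕ):ℝ)-1)) = -1 by norm_num, Real.rpow_neg_one]
      norm_num
    rw [e, show ((1:ℝ)/(((2:ℕ):ℝ)-1)) = 1 by norm_num, Real.rpow_one] at ht1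
    have h1 := ht1.trans ht2
    have h2 : 40 ≤ 1 / δ := by rw [le_div_iff₀ hδ0]; linarith
    nlinarith
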